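/- arXiv:math/0002047 — 3 statements merged into one kernel-verified Lean document; each statement's English description precedes it below -/
import Mathlib

section
/- Let P ∈ ℤ[x] be a nonzero polynomial with deg P ≤ d and L(P) ≤ L, where L ≥ 3. Then |P(e)| ≥ exp{ −1.3·10⁵ · d² · (log L + d) }. -/
/-!
The bound is first proved for an irreducible `P` of degree `d` with `P(0) ≠ 0`, by a variant of the
Hermite–Gelfond method.

* The box principle on the first Taylor coefficients at `0` gives a nonzero family of integers
  `p i j k` such that `F(z) = ∑ p i j k * e ^ k * z ^ i * exp (j * z)`, with `k < d`, has very small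
  derivatives at the integers `0 ≤ s < S` (`exists_small_forms`, `exists_auxiliary`). The later
  Taylor coefficients are controlled by the growth of `F` on a disc of radius `ρ * S`.
* The value of the `t`-th derivative of `F` at `s` is `Q(e)` for an explicit integer polynomial `Q`
  depending on `s` and `t`. Replacing `e` by a root `α` of `P`, the family `∑ p i j k * α ^ k` is
  nonzero since `k < d`, so the numbers `Q(α)` cannot all vanish for `s < S` and `t < T`
  (`zero_estimate`, via a Wronskian-type determinant). Hence some `Q` is prime to `P`.
* The resultant of `P` and `Q` is then a nonzero integer. Expanding the Sylvester determinant bounds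
  it from above in terms of `|P(e)|` and `|Q(e)|` (`one_le_of_resultant_ne_zero`). As `|Q(e)|` is too
  small to matter, `|P(e)|` is bounded below (`exp_bound_of_irreducible`).

For a general `P` the length is compared with the Mahler measure, which is multiplicative: the bound
`exp (-130000 n² (m + n))`, with `n` the degree and `m` the logarithmic Mahler measure, holds for
irreducible polynomials and passes to products because `n` and `m` are additive (`abs_aeval_ge`).
Finally `m ≤ log L(P)`.
-/

open Polynomial

/-- The length of an integer polynomial: the sum of the absolute values of its
coefficients. -/
noncomputable def polyLength (P : Polynomial ℤ) : ℝ :=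
  ∑ i ∈ Finset.range (P.natDegree + 1), (|P.coeff i| : ℝ)

/-! ### Resultants -/

theorem abs_det_le_prod_col {n : Type*} [Fintype n] [DecidableEq n] (A : Matrix n n ℝ) :
    |A.det| ≤ ∏ j, ∑ i, |A i j| := by
  rw [Matrix.det_apply]
  calc |∑ σ : Equiv.Perm n, Equiv.Perm.sign σ • ∏ i, A (σ i) i|
      ≤ ∑ σ : Equiv.Perm n, |Equiv.Perm.sign σ • ∏ i, A (σ i) i| :=
        Finset.abs_sum_le_sum_abs _ _
    _ = ∑ σ : Equiv.Perm n, ∏ i, |A (σ i) i| := by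
        refine Finset.sum_congr rfl fun σ _ => ?_
        rcases Int.units_eq_one_or (Equiv.Perm.sign σ) with h | h <;> simp [h, Finset.abs_prod]
    _ ≤ ∑ f : n → n, ∏ i, |A (f i) i| := by
        rw [← Finset.sum_image (s := Finset.univ) (g := fun σ : Equiv.Perm n => (σ : n → n))
          (f := fun f : n → n => ∏ i, |A (f i) i|)
          (fun a _ b _ h => DFunLike.coe_injective h)]
        exact Finset.sum_le_sum_of_subset_of_nonneg (Finset.subset_univ _)
          fun f _ _ => Finset.prod_nonneg fun i _ => abs_nonneg _
    _ = ∏ j, ∑ i, |A i j| := by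
        rw [Finset.prod_univ_sum]; simp

/-- A determinant is small as soon as some row combination `v ᵥ* A` with `v k = 1` is small. -/
theorem abs_det_le_vecMul {n : Type*} [Fintype n] [DecidableEq n] (A : Matrix n n ℝ)
    (v : n → ℝ) (k : n) (hv : v k = 1) :
    |A.det| ≤ ∑ j, |(Matrix.vecMul v A) j| * ∏ c ∈ Finset.univ.erase j, ∑ i, |A i c| := by
  have h1 : A.det = ∑ j, (Matrix.vecMul v A) j * A.adjugate j k := by
    have : Matrix.vecMul (Matrix.vecMul v A) A.adjugate k = A.det := by
      rw [Matrix.vecMul_vecMul, Matrix.mul_adjugate, Matrix.vecMul_smul, Matrix.vecMul_one]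
      simp [hv]
    rw [← this]; rfl
  have h2 : ∀ j, |A.adjugate j k| ≤ ∏ c ∈ Finset.univ.erase j, ∑ i, |A i c| := by
    intro j
    have : A.adjugate j k = (A.updateCol j (Pi.single k 1)).det := by
      rw [← Matrix.cramer_apply, Matrix.cramer_eq_adjugate_mulVec]
      simp
    rw [this]
    refine (abs_det_le_prod_col _).trans (le_of_eq ?_)
    rw [← Finset.mul_prod_erase Finset.univ _ (Finset.mem_univ j)]
    have : ∑ i, |A.updateCol j (Pi.single k 1) i j| = 1 := by
      simp [Pi.single_apply, apply_ite abs]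
    rw [this, one_mul]
    refine Finset.prod_congr rfl fun c hc => ?_
    simp [Matrix.updateCol_ne (Finset.ne_of_mem_erase hc)]
  rw [h1]
  refine (Finset.abs_sum_le_sum_abs _ _).trans (Finset.sum_le_sum fun j _ => ?_)
  rw [abs_mul]
  exact mul_le_mul_of_nonneg_left (h2 j) (abs_nonneg _)

theorem sum_window {α : Type*} [AddCommMonoid α] (N j m : ℕ) (h : j + m < N) (F : ℕ → ℕ → α) :
    ∑ i : Fin N, (if (i : ℕ) ∈ Set.Icc j (j + m) then F i (i - j) else 0) =
      ∑ k ∈ Finset.range (m + 1), F (j + k) k := by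
  rw [Fin.sum_univ_eq_sum_range (fun i => if i ∈ Set.Icc j (j + m) then F i (i - j) else 0) N,
    ← Finset.sum_filter]
  refine (Finset.sum_bij (fun k _ => j + k) ?_ ?_ ?_ ?_).symm
  · intro k hk; simp at hk ⊢; omega
  · intro a _ b _ h; omega
  · intro b hb; simp at hb; exact ⟨b - j, by simp; omega, by omega⟩
  · intro k hk; simp

theorem aeval_eq_sum_range_real (f : ℤ[X]) (x : ℝ) :
    aeval x f = ∑ i ∈ Finset.range (f.natDegree + 1), (f.coeff i : ℝ) * x ^ i := by
  rw [aeval_eq_sum_range]; simp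

/-- If the resultant of `f` and `g` does not vanish, then `f` and `g` cannot both be very small
at the same real point `x ≥ 1`. -/
theorem one_le_of_resultant_ne_zero (f g : ℤ[X]) (h : resultant f g ≠ 0) (x : ℝ) (hx : 1 ≤ x)
    (F G : ℝ) (hF : polyLength f ≤ F) (hF1 : 1 ≤ F) (hG : polyLength g ≤ G) (hG1 : 1 ≤ G)
    (q : ℕ) (hq : g.natDegree ≤ q) (hm : 1 ≤ f.natDegree) :
    1 ≤ |aeval x f| * (q * x ^ q * F ^ q * G ^ f.natDegree) +
      |aeval x g| * (f.natDegree * x ^ f.natDegree * F ^ q * G ^ (f.natDegree - 1)) := by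
  set m := f.natDegree with hmdef
  set n := g.natDegree with hndef
  set A : Matrix (Fin (m + n)) (Fin (m + n)) ℝ :=
    (Int.castRingHom ℝ).mapMatrix (sylvester f g m n) with hA
  have hdet : ((resultant f g : ℤ) : ℝ) = A.det := by
    rw [hA, ← RingHom.map_det]; rfl
  have hone : 1 ≤ |A.det| := by
    rw [← hdet, ← Int.cast_abs]
    exact_mod_cast Int.one_le_abs h
  have hAl : ∀ (i : Fin (m + n)) (j : Fin m), A i (Fin.castAdd n j) =
      if (i : ℕ) ∈ Set.Icc (j : ℕ) (j + n) then (g.coeff (i - j) : ℝ) else 0 := by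
    intro i j
    simp [hA, sylvester, apply_ite (Int.cast : ℤ → ℝ)]
  have hAr : ∀ (i : Fin (m + n)) (j : Fin n), A i (Fin.natAdd m j) =
      if (i : ℕ) ∈ Set.Icc (j : ℕ) (j + m) then (f.coeff (i - j) : ℝ) else 0 := by
    intro i j
    simp [hA, sylvester, apply_ite (Int.cast : ℤ → ℝ)]
  have hcl : ∀ j : Fin m, ∑ i, |A i (Fin.castAdd n j)| ≤ G := by
    intro j
    refine le_trans (le_of_eq ?_) hG
    simp only [hAl, apply_ite abs, abs_zero]
    rw [sum_window (m + n) j n (by omega) (fun _ k => |(g.coeff k : ℝ)|)]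
    rfl
  have hcr : ∀ j : Fin n, ∑ i, |A i (Fin.natAdd m j)| ≤ F := by
    intro j
    refine le_trans (le_of_eq ?_) hF
    simp only [hAr, apply_ite abs, abs_zero]
    rw [sum_window (m + n) j m (by omega) (fun _ k => |(f.coeff k : ℝ)|)]
    rfl
  set v : Fin (m + n) → ℝ := fun i => x ^ (i : ℕ) with hv
  have hvl : ∀ j : Fin m, Matrix.vecMul v A (Fin.castAdd n j) = x ^ (j : ℕ) * aeval x g := by
    intro j
    simp only [Matrix.vecMul, dotProduct, hAl, mul_ite, mul_zero, hv]
    rw [sum_window (m + n) j n (by omega) (fun i k => x ^ i * (g.coeff k : ℝ)),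
      aeval_eq_sum_range_real, Finset.mul_sum]
    refine Finset.sum_congr rfl fun k _ => ?_
    rw [pow_add]; ring
  have hvr : ∀ j : Fin n, Matrix.vecMul v A (Fin.natAdd m j) = x ^ (j : ℕ) * aeval x f := by
    intro j
    simp only [Matrix.vecMul, dotProduct, hAr, mul_ite, mul_zero, hv]
    rw [sum_window (m + n) j m (by omega) (fun i k => x ^ i * (f.coeff k : ℝ)),
      aeval_eq_sum_range_real, Finset.mul_sum]
    refine Finset.sum_congr rfl fun k _ => ?_
    rw [pow_add]; ring
  have hmain := abs_det_le_vecMul A v ⟨0, by omega⟩ (by simp [hv])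
  set w : Fin (m + n) → ℝ := fun c => Fin.addCases (fun _ => G) (fun _ => F) c with hw
  have hcol : ∀ c, ∑ i, |A i c| ≤ w c := by
    intro c
    induction c using Fin.addCases with
    | left j => simpa [hw] using hcl j
    | right j => simpa [hw] using hcr j
  have hw1 : ∀ c, 1 ≤ w c := by
    intro c
    induction c using Fin.addCases with
    | left j => simpa [hw] using hG1
    | right j => simpa [hw] using hF1
  have hwprod : ∏ c, w c = G ^ m * F ^ n := by
    rw [Fin.prod_univ_add]; simp [hw]
  have herase : ∀ j, ∏ c ∈ Finset.univ.erase j, ∑ i, |A i c| ≤ ∏ c ∈ Finset.univ.erase j, w c :=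
    fun j => Finset.prod_le_prod (fun c _ => Finset.sum_nonneg fun i _ => abs_nonneg _)
      (fun c _ => hcol c)
  have hel : ∀ j : Fin m, ∏ c ∈ Finset.univ.erase (Fin.castAdd n j), w c = G ^ (m - 1) * F ^ n := by
    intro j
    have h3 := Finset.mul_prod_erase Finset.univ w (Finset.mem_univ (Fin.castAdd n j))
    rw [hwprod] at h3
    have h4 : w (Fin.castAdd n j) = G := by simp [hw]
    rw [h4] at h3
    have h5 : G ^ m = G * G ^ (m - 1) := by
      rw [← pow_succ', Nat.sub_add_cancel hm]
    rw [h5, mul_assoc] at h3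
    exact mul_left_cancel₀ (by positivity) h3
  have her : ∀ j : Fin n, ∏ c ∈ Finset.univ.erase (Fin.natAdd m j), w c ≤ G ^ m * F ^ n := by
    intro j
    rw [← hwprod, ← Finset.mul_prod_erase Finset.univ w (Finset.mem_univ (Fin.natAdd m j))]
    exact le_mul_of_one_le_left
      (Finset.prod_nonneg fun c _ => zero_le_one.trans (hw1 c)) (hw1 _)
  have hFq : F ^ n ≤ F ^ q := pow_le_pow_right₀ hF1 hq
  refine hone.trans (hmain.trans ?_)
  rw [Fin.sum_univ_add, add_comm]
  refine add_le_add ?_ ?_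
  · calc ∑ j : Fin n, |Matrix.vecMul v A (Fin.natAdd m j)| *
          ∏ c ∈ Finset.univ.erase (Fin.natAdd m j), ∑ i, |A i c|
        ≤ ∑ j : Fin n, (x ^ q * |aeval x f|) * (G ^ m * F ^ q) := by
          refine Finset.sum_le_sum fun j _ => ?_
          rw [hvr, abs_mul, abs_of_nonneg (by positivity : (0 : ℝ) ≤ x ^ (j : ℕ))]
          gcongr
          · have := j.2; omega
          · exact ((herase _).trans (her j)).trans (by gcongr)
      _ = n * ((x ^ q * |aeval x f|) * (G ^ m * F ^ q)) := by simp
      _ ≤ q * ((x ^ q * |aeval x f|) * (G ^ m * F ^ q)) := by gcongr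
      _ = _ := by ring
  · calc ∑ j : Fin m, |Matrix.vecMul v A (Fin.castAdd n j)| *
          ∏ c ∈ Finset.univ.erase (Fin.castAdd n j), ∑ i, |A i c|
        ≤ ∑ j : Fin m, (x ^ m * |aeval x g|) * (G ^ (m - 1) * F ^ q) := by
          refine Finset.sum_le_sum fun j _ => ?_
          rw [hvl, abs_mul, abs_of_nonneg (by positivity : (0 : ℝ) ≤ x ^ (j : ℕ))]
          gcongr
          · exact j.2.le
          · exact ((herase _).trans (hel j).le).trans (by gcongr)
      _ = m * ((x ^ m * |aeval x g|) * (G ^ (m - 1) * F ^ q)) := by simp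
      _ = _ := by ring

/-! ### The zero estimate -/

section ZeroEstimate

variable {K : Type*} [Field K]

/-- The operator `D + e` on polynomials, which describes differentiation of `q(z) exp(e z)`:
`(q(z) exp(e z))' = ((D + e) q)(z) exp(e z)`. -/
noncomputable def shiftDeriv (e : ℕ) (q : K[X]) : K[X] := derivative q + C (e : K) * q

theorem shiftDeriv_iterate_spec (e : ℕ) (q : K[X]) (D : ℕ) (hq : q.natDegree ≤ D) (a : ℕ) :
    ((shiftDeriv e)^[a] q).natDegree ≤ D ∧
      ((shiftDeriv e)^[a] q).coeff D = (e : K) ^ a * q.coeff D := by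
  induction a with
  | zero => simpa using hq
  | succ a ih =>
    rw [Function.iterate_succ_apply']
    set r := (shiftDeriv e)^[a] q
    refine ⟨?_, ?_⟩
    · refine natDegree_add_le_of_degree_le ?_ ((natDegree_C_mul_le _ _).trans ih.1)
      exact (natDegree_derivative_le r).trans ((Nat.sub_le _ _).trans ih.1)
    · rw [shiftDeriv, coeff_add, coeff_derivative, coeff_C_mul, ih.2,
        coeff_eq_zero_of_natDegree_lt (by omega)]
      ring

theorem coeff_prod_sum_natDegree_le {ι : Type*} (s : Finset ι) (f : ι → K[X]) (D : ι → ℕ)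
    (h : ∀ i ∈ s, (f i).natDegree ≤ D i) :
    (∏ i ∈ s, f i).natDegree ≤ ∑ i ∈ s, D i ∧
      (∏ i ∈ s, f i).coeff (∑ i ∈ s, D i) = ∏ i ∈ s, (f i).coeff (D i) := by
  classical
  induction s using Finset.induction_on with
  | empty => simp
  | insert a s ha ih =>
    have ih' := ih fun i hi => h i (Finset.mem_insert_of_mem hi)
    have h1 := h a (Finset.mem_insert_self a s)
    rw [Finset.prod_insert ha, Finset.sum_insert ha, Finset.prod_insert ha]
    exact ⟨natDegree_mul_le_of_le h1 ih'.1, by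
      rw [coeff_mul_add_eq_of_natDegree_le h1 ih'.1, ih'.2]⟩

theorem coeff_det_sum_natDegree_le {n : ℕ} (A : Matrix (Fin n) (Fin n) K[X]) (D : Fin n → ℕ)
    (h : ∀ i j, (A i j).natDegree ≤ D j) :
    A.det.natDegree ≤ ∑ j, D j ∧
      A.det.coeff (∑ j, D j) = (Matrix.of fun i j => (A i j).coeff (D j)).det := by
  have key := fun σ : Equiv.Perm (Fin n) =>
    coeff_prod_sum_natDegree_le Finset.univ (fun j => A (σ j) j) D (fun j _ => h _ j)
  rw [Matrix.det_apply, Matrix.det_apply]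
  refine ⟨natDegree_sum_le_of_forall_le _ _ fun σ _ => ?_, ?_⟩
  · exact (natDegree_smul_le _ _).trans (key σ).1
  · rw [finsetSum_coeff]
    refine Finset.sum_congr rfl fun σ _ => ?_
    rw [coeff_smul, (key σ).2]
    rfl

/-- The power series `c * exp(e X)`. -/
noncomputable def expTerm (c : K) (e : ℕ) : PowerSeries K :=
  PowerSeries.mk fun n => c * ((e : K) ^ n / (n.factorial : K))

theorem derivative_expTerm [CharZero K] (c : K) (e : ℕ) :
    PowerSeries.derivative K (expTerm c e) = PowerSeries.C (e : K) * expTerm c e := by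
  ext n
  rw [PowerSeries.coeff_derivative, PowerSeries.coeff_C_mul, expTerm, PowerSeries.coeff_mk,
    PowerSeries.coeff_mk, Nat.factorial_succ]
  have h1 : ((n : K) + 1) ≠ 0 := by exact_mod_cast Nat.succ_ne_zero n
  have h2 : (n.factorial : K) ≠ 0 := by exact_mod_cast n.factorial_ne_zero
  push_cast
  field_simp
  ring

theorem isUnit_expTerm (c : K) (hc : c ≠ 0) (e : ℕ) : IsUnit (expTerm c e) := by
  rw [PowerSeries.isUnit_iff_constantCoeff, ← PowerSeries.coeff_zero_eq_constantCoeff_apply,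
    expTerm, PowerSeries.coeff_mk]
  simpa using hc

/-- Taylor expansion of a polynomial at `s`, as a ring homomorphism into power series. -/
noncomputable def expandAt (s : K) : K[X] →+* PowerSeries K :=
  Polynomial.coeToPowerSeries.ringHom.comp (taylorAlgHom s).toRingHom

theorem expandAt_apply (s : K) (q : K[X]) : expandAt s q = ((taylor s q : K[X]) : PowerSeries K) :=
  rfl

theorem derivative_expandAt (s : K) (q : K[X]) :
    PowerSeries.derivative K (expandAt s q) = expandAt s (derivative q) := by
  rw [expandAt_apply, expandAt_apply, PowerSeries.derivative_coe, taylor_apply, taylor_apply,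
    derivative_comp]
  simp

theorem iterate_derivative_expandAt_mul [CharZero K] (s c : K) (e : ℕ) (q : K[X]) (a : ℕ) :
    (PowerSeries.derivative K)^[a] (expandAt s q * expTerm c e) =
      expandAt s ((shiftDeriv e)^[a] q) * expTerm c e := by
  induction a with
  | zero => rfl
  | succ a ih =>
    rw [Function.iterate_succ_apply', Function.iterate_succ_apply', ih, Derivation.leibniz,
      derivative_expTerm, derivative_expandAt, shiftDeriv, map_add, map_mul]
    have : expandAt s (C (e : K)) = PowerSeries.C (e : K) := by
      rw [expandAt_apply, taylor_C, Polynomial.coe_C]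
    rw [this, smul_eq_mul, smul_eq_mul]
    ring

theorem powerSeries_iterate_derivative_sum {ι : Type*} (s : Finset ι) (f : ι → PowerSeries K) (a : ℕ) :
    (PowerSeries.derivative K)^[a] (∑ i ∈ s, f i) =
      ∑ i ∈ s, (PowerSeries.derivative K)^[a] (f i) := by
  induction a with
  | zero => rfl
  | succ a ih => simp only [Function.iterate_succ_apply', ih, map_sum]

theorem X_pow_dvd_iterate_derivative (G : PowerSeries K) (T a : ℕ)
    (h : (PowerSeries.X : PowerSeries K) ^ T ∣ G) :
    (PowerSeries.X : PowerSeries K) ^ (T - a) ∣ (PowerSeries.derivative K)^[a] G := by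
  induction a with
  | zero => simpa using h
  | succ a ih =>
    rw [Function.iterate_succ_apply']
    rw [PowerSeries.X_pow_dvd_iff] at ih ⊢
    intro m hm
    rw [PowerSeries.coeff_derivative, ih (m + 1) (by omega), zero_mul]

/-- **Zero estimate.** If `∑ q_j(z) Y ^ e_j` vanishes to order `T` along the analytic curves
`(s + z, α ^ s exp z)` for each `s < S`, then `S` and `T` are bounded in terms of the degrees.
The determinant of the `(D + e_j)^a q_j` is a nonzero polynomial (its top coefficient is a
Vandermonde determinant times the leading coefficients) that vanishes to high order at
each `s < S`. -/
theorem zero_estimate_aux [CharZero K] {n : ℕ} (hn : 0 < n) (α : K) (hα : α ≠ 0) (e : Fin n → ℕ)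
    (he : Function.Injective e) (q : Fin n → K[X]) (hq0 : ∀ j, q j ≠ 0) (I : ℕ)
    (hq : ∀ j, (q j).natDegree ≤ I) (S T : ℕ)
    (h : ∀ s < S, (PowerSeries.X : PowerSeries K) ^ T ∣
      ∑ j, expandAt (s : K) (q j) * expTerm (α ^ (e j * s)) (e j)) :
    S * (T - (n - 1)) ≤ n * I := by
  set A : Matrix (Fin n) (Fin n) K[X] :=
    Matrix.of fun a j => (shiftDeriv (e j))^[(a : ℕ)] (q j) with hA
  have hspec := fun (a j : Fin n) => shiftDeriv_iterate_spec (e j) (q j) _ le_rfl (a : ℕ)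
  have hdet := coeff_det_sum_natDegree_le A (fun j => (q j).natDegree)
    (fun a j => (hspec a j).1)
  have hne : A.det ≠ 0 := by
    intro h0
    have h1 := hdet.2
    rw [h0, coeff_zero] at h1
    have h2 : (Matrix.of fun i j => (A i j).coeff (q j).natDegree) =
        (Matrix.vandermonde fun j => (e j : K)).transpose *
          Matrix.diagonal fun j => (q j).leadingCoeff := by
      ext a j
      rw [Matrix.mul_diagonal]
      exact (hspec a j).2
    rw [h2, Matrix.det_mul, Matrix.det_transpose, Matrix.det_diagonal] at h1
    refine mul_ne_zero ?_ ?_ h1.symm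
    · rw [Matrix.det_vandermonde_ne_zero_iff]
      exact fun a b hab => he (Nat.cast_injective (R := K) hab)
    · exact Finset.prod_ne_zero_iff.2 fun j _ => leadingCoeff_ne_zero.2 (hq0 j)
  have hdvd : ∀ s < S, (X - C (s : K)) ^ (T - (n - 1)) ∣ A.det := by
    intro s hs
    rw [X_sub_C_pow_dvd_iff, ← taylor_apply]
    set u : Fin n → PowerSeries K := fun j => expTerm (α ^ (e j * s)) (e j) with hu
    set B := (expandAt (s : K)).mapMatrix A with hB
    have hBu : ∀ a, (PowerSeries.X : PowerSeries K) ^ (T - (n - 1)) ∣ B.mulVec u a := by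
      intro a
      have h1 : B.mulVec u a = (PowerSeries.derivative K)^[(a : ℕ)]
          (∑ j, expandAt (s : K) (q j) * expTerm (α ^ (e j * s)) (e j)) := by
        rw [powerSeries_iterate_derivative_sum]
        simp only [iterate_derivative_expandAt_mul]
        rfl
      rw [h1]
      exact (pow_dvd_pow _ (by omega)).trans (X_pow_dvd_iterate_derivative _ T a (h s hs))
    have h2 : (B.adjugate.mulVec (B.mulVec u)) ⟨0, hn⟩ = B.det * u ⟨0, hn⟩ := by
      rw [Matrix.mulVec_mulVec, Matrix.adjugate_mul, Matrix.smul_mulVec, Matrix.one_mulVec]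
      rfl
    have h3 : (PowerSeries.X : PowerSeries K) ^ (T - (n - 1)) ∣ B.det := by
      rw [← (isUnit_expTerm (α ^ (e ⟨0, hn⟩ * s)) (pow_ne_zero _ hα) (e ⟨0, hn⟩)).dvd_mul_right]
      change _ ∣ B.det * u ⟨0, hn⟩
      rw [← h2, Matrix.mulVec, dotProduct]
      exact Finset.dvd_sum fun a _ => Dvd.dvd.mul_left (hBu a) _
    rw [hB, ← RingHom.map_det, expandAt_apply, PowerSeries.X_pow_dvd_iff] at h3
    rw [Polynomial.X_pow_dvd_iff]
    intro m hm
    simpa using h3 m hm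
  have hprod : ∏ s ∈ Finset.range S, (X - C (s : K)) ^ (T - (n - 1)) ∣ A.det := by
    refine Finset.prod_dvd_of_coprime ?_ fun s hs => hdvd s (Finset.mem_range.1 hs)
    intro a _ b _ hab
    refine IsCoprime.pow ?_
    exact isCoprime_X_sub_C_of_isUnit_sub
      (sub_ne_zero.2 (by exact_mod_cast hab) : (a : K) - (b : K) ≠ 0).isUnit
  have hdeg := natDegree_le_of_dvd hprod hne
  rw [natDegree_prod _ _ fun s _ => pow_ne_zero _ (X_sub_C_ne_zero _)] at hdeg
  simp only [natDegree_pow, natDegree_X_sub_C, mul_one, Finset.sum_const, Finset.card_range,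
    smul_eq_mul] at hdeg
  refine hdeg.trans (hdet.1.trans ?_)
  refine (Finset.sum_le_sum fun j _ => hq j).trans ?_
  simp

/-- The integer `exp(-j s) * (d/dz)^t (z^i exp(j z))` at `z = s`. -/
def derivCoeff (i j s t : ℕ) : ℕ :=
  ∑ k ∈ Finset.HasAntidiagonal.antidiagonal t, t.descFactorial k.1 * i.choose k.1 * s ^ (i - k.1) * j ^ k.2

theorem coeff_expandAt_mul_expTerm [CharZero K] (i j s t : ℕ) (c : K) :
    (t.factorial : K) * PowerSeries.coeff t (expandAt (s : K) (X ^ i) * expTerm c j) =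
      c * (derivCoeff i j s t : K) := by
  rw [PowerSeries.coeff_mul, derivCoeff, Nat.cast_sum, Finset.mul_sum, Finset.mul_sum]
  refine Finset.sum_congr rfl fun k hk => ?_
  have hk' : k.1 + k.2 = t := Finset.HasAntidiagonal.mem_antidiagonal.1 hk
  have h1 : (t.factorial : K) = k.2.factorial * t.descFactorial k.1 := by
    have := Nat.factorial_mul_descFactorial (n := t) (k := k.1) (by omega)
    rw [show t - k.1 = k.2 by omega] at this
    exact_mod_cast this.symm
  have h2 : (k.2.factorial : K) ≠ 0 := by exact_mod_cast k.2.factorial_ne_zero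
  rw [h1, expandAt_apply, Polynomial.coeff_coe, taylor_apply, X_pow_comp, coeff_X_add_C_pow,
    expTerm, PowerSeries.coeff_mk]
  push_cast
  field_simp

/-- The expressions obtained from the derivatives at `s` of `∑ p i j * z ^ i * exp (j * z)` on
replacing `e` by `α` cannot all vanish for `s < S` and `t < T`. -/
theorem zero_estimate [CharZero K] (I J S T : ℕ) (α : K) (hα : α ≠ 0) (p : Fin I → Fin J → K)
    (hp : ∃ i j, p i j ≠ 0) (hST : J * (I - 1) < S * (T - (J - 1))) :
    ∃ s < S, ∃ t < T,
      ∑ i : Fin I, ∑ j : Fin J, p i j * (derivCoeff i j s t : K) * α ^ ((j : ℕ) * s) ≠ 0 := by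
  classical
  by_contra! hcon
  obtain ⟨i₀, j₀, hp⟩ := hp
  set q : Fin J → K[X] := fun j => ∑ i : Fin I, C (p i j) * X ^ (i : ℕ) with hq
  have hqcoeff : ∀ (i : Fin I) (j : Fin J), (q j).coeff i = p i j := by
    intro i j
    simp only [hq, finsetSum_coeff, coeff_C_mul, coeff_X_pow]
    rw [Finset.sum_eq_single i]
    · simp
    · intro b _ hb
      rw [if_neg, mul_zero]
      exact fun h => hb (Fin.ext h.symm)
    · simp
  have hqdeg : ∀ j, (q j).natDegree ≤ I - 1 := by
    intro j
    refine natDegree_sum_le_of_forall_le _ _ fun i _ => ?_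
    refine (natDegree_C_mul_X_pow_le _ _).trans ?_
    have := i.2
    omega
  set Jn : Finset (Fin J) := Finset.univ.filter fun j => q j ≠ 0 with hJn
  have hj₀ : j₀ ∈ Jn := by
    simp only [hJn, Finset.mem_filter, Finset.mem_univ, true_and]
    intro h0
    exact hp (by rw [← hqcoeff, h0, coeff_zero])
  have hcard : Jn.card ≤ J := by simpa using Finset.card_le_univ Jn
  have hpos : 0 < Jn.card := Finset.card_pos.2 ⟨_, hj₀⟩
  set ε := Jn.equivFin.symm
  have hres := zero_estimate_aux hpos α hα (fun l => ((ε l : Fin J) : ℕ))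
    (fun a b hab => ε.injective (Subtype.ext (Fin.ext hab))) (fun l => q (ε l))
    (fun l => (Finset.mem_filter.1 (ε l).2).2) (I - 1) (fun l => hqdeg _) S T (by
      intro s hs
      have h1 : ∑ l, expandAt (s : K) (q (ε l)) * expTerm (α ^ (((ε l : Fin J) : ℕ) * s)) (ε l) =
          ∑ j : Fin J, expandAt (s : K) (q j) * expTerm (α ^ ((j : ℕ) * s)) j := by
        rw [Equiv.sum_comp ε (fun j : Jn => expandAt (s : K) (q j) *
          expTerm (α ^ (((j : Fin J) : ℕ) * s)) (j : Fin J)),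
          Finset.sum_coe_sort Jn (fun j : Fin J => expandAt (s : K) (q j) *
          expTerm (α ^ ((j : ℕ) * s)) j)]
        refine Finset.sum_subset (Finset.subset_univ _) fun j _ hj => ?_
        have : q j = 0 := by simpa [hJn] using hj
        rw [this, map_zero, zero_mul]
      rw [h1, PowerSeries.X_pow_dvd_iff]
      intro t ht
      have h2 : (t.factorial : K) ≠ 0 := by exact_mod_cast t.factorial_ne_zero
      refine (mul_eq_zero.1 ?_).resolve_left h2
      rw [← hcon s hs t ht, Finset.sum_comm, map_sum, Finset.mul_sum]
      refine Finset.sum_congr rfl fun j _ => ?_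
      have h3 : expandAt (s : K) (q j) =
          ∑ i : Fin I, PowerSeries.C (p i j) * expandAt (s : K) (X ^ (i : ℕ)) := by
        rw [hq, map_sum]
        refine Finset.sum_congr rfl fun i _ => ?_
        rw [map_mul, expandAt_apply (s : K) (C _), taylor_C, Polynomial.coe_C]
      rw [h3, Finset.sum_mul, map_sum, Finset.mul_sum]
      refine Finset.sum_congr rfl fun i _ => ?_
      rw [mul_assoc, PowerSeries.coeff_C_mul, mul_left_comm, coeff_expandAt_mul_expTerm]
      ring)
  have h4 : S * (T - (J - 1)) ≤ S * (T - (Jn.card - 1)) := by gcongr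
  have h5 : Jn.card * (I - 1) ≤ J * (I - 1) := by gcongr
  omega

end ZeroEstimate

/-! ### Small values of linear forms -/

/-- Dirichlet's box principle: if there are more integer points in the box `[0, X] ^ ι` than
small boxes, then a nonzero integer vector makes all the given linear forms small. -/
theorem exists_small_forms {ι : Type*} [Fintype ι] [Nonempty ι] (M X Q : ℕ) (c : Fin M → ι → ℝ)
    (B : ℝ) (hc0 : ∀ n x, 0 ≤ c n x) (hc : ∀ n x, c n x < B) (hB : 0 < B) (hX : 1 ≤ X) (hQ : 1 ≤ Q)
    (h : Q ^ M < (X + 1) ^ Fintype.card ι) :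
    ∃ p : ι → ℤ, p ≠ 0 ∧ (∀ x, |p x| ≤ X) ∧
      ∀ n, |∑ x, (p x : ℝ) * c n x| ≤ Fintype.card ι * X * B / Q := by
  classical
  set W : ℝ := Fintype.card ι * X * B with hW
  have hX0 : (0 : ℝ) < X := by exact_mod_cast hX
  have hQ0 : (0 : ℝ) < Q := by exact_mod_cast hQ
  have hW0 : 0 < W := by
    have : (0 : ℝ) < Fintype.card ι := by exact_mod_cast Fintype.card_pos
    positivity
  let v : (ι → Fin (X + 1)) → Fin M → ℝ := fun a n => ∑ x, ((a x : ℕ) : ℝ) * c n x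
  have hv0 : ∀ a n, 0 ≤ v a n := fun a n =>
    Finset.sum_nonneg fun x _ => mul_nonneg (Nat.cast_nonneg _) (hc0 n x)
  have hvW : ∀ a n, v a n < W := by
    intro a n
    have h1 : ∀ x : ι, ((a x : ℕ) : ℝ) * c n x < X * B := by
      intro x
      have : ((a x : ℕ) : ℝ) ≤ X := by exact_mod_cast Nat.lt_succ_iff.mp (a x).2
      calc ((a x : ℕ) : ℝ) * c n x ≤ X * c n x := mul_le_mul_of_nonneg_right this (hc0 n x)
        _ < X * B := mul_lt_mul_of_pos_left (hc n x) hX0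
    calc v a n < ∑ _x : ι, (X : ℝ) * B :=
          Finset.sum_lt_sum_of_nonempty Finset.univ_nonempty fun x _ => h1 x
      _ = W := by simp [hW, mul_assoc]
  have hfl : ∀ a n, ⌊v a n * Q / W⌋₊ < Q := by
    intro a n
    rw [Nat.floor_lt (by have := hv0 a n; positivity), div_lt_iff₀ hW0, mul_comm]
    exact mul_lt_mul_of_pos_left (hvW a n) hQ0
  obtain ⟨a, b, hab, hf⟩ := Fintype.exists_ne_map_eq_of_card_lt
    (fun (a : ι → Fin (X + 1)) (n : Fin M) => (⟨⌊v a n * Q / W⌋₊, hfl a n⟩ : Fin Q))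
    (by simpa using h)
  refine ⟨fun x => ((a x : ℕ) : ℤ) - ((b x : ℕ) : ℤ), ?_, ?_, ?_⟩
  · intro h0
    apply hab
    funext x
    have := congrFun h0 x
    simp only [Pi.zero_apply] at this
    exact Fin.ext (by omega)
  · intro x
    have := (a x).2
    have := (b x).2
    rw [abs_le]
    constructor <;> dsimp only <;> omega
  · intro n
    have h1 : ∑ x, ((((a x : ℕ) : ℤ) - ((b x : ℕ) : ℤ) : ℤ) : ℝ) * c n x = v a n - v b n := by
      simp only [v, ← Finset.sum_sub_distrib]
      refine Finset.sum_congr rfl fun x _ => ?_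
      push_cast
      ring
    rw [h1, le_div_iff₀ hQ0]
    have h2 : ⌊v a n * Q / W⌋₊ = ⌊v b n * Q / W⌋₊ := by
      have := congrFun hf n
      simpa using this
    have ha0 : 0 ≤ v a n * Q / W := by have := hv0 a n; positivity
    have hb0 : 0 ≤ v b n * Q / W := by have := hv0 b n; positivity
    have a1 := Nat.floor_le ha0
    have a2 := Nat.lt_floor_add_one (v a n * Q / W)
    have b1 := Nat.floor_le hb0
    have b2 := Nat.lt_floor_add_one (v b n * Q / W)
    rw [h2] at a1 a2
    have h3 : |v a n * Q / W - v b n * Q / W| ≤ 1 := by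
      rw [abs_le]
      constructor <;> linarith
    rw [← sub_div, ← sub_mul, abs_div, abs_mul, abs_of_pos hW0, abs_of_pos hQ0,
      div_le_one hW0] at h3
    exact h3

/-! ### Taylor expansions of `z ^ i * exp (j * z)` -/

/-- The coefficient of `z ^ n` in the Taylor expansion of `z ^ i * exp (j * z)` at `0`. -/
noncomputable def taylorCoeff (i j n : ℕ) : ℝ :=
  if i ≤ n then (j : ℝ) ^ (n - i) / ((n - i).factorial : ℝ) else 0

theorem taylorCoeff_nonneg (i j n : ℕ) : 0 ≤ taylorCoeff i j n := by
  unfold taylorCoeff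
  split_ifs <;> positivity

theorem taylorCoeff_add (i j l : ℕ) : taylorCoeff i j (i + l) = (j : ℝ) ^ l / (l.factorial : ℝ) := by
  simp [taylorCoeff]

theorem hasSum_taylorCoeff_mul_iff (i j : ℕ) (f : ℕ → ℝ) (a : ℝ) :
    HasSum (fun n => taylorCoeff i j n * f n) a ↔
      HasSum (fun l => (j : ℝ) ^ l / (l.factorial : ℝ) * f (i + l)) a := by
  rw [← Function.Injective.hasSum_iff (add_right_injective i)]
  · simp only [Function.comp_def, taylorCoeff_add]
  · intro n hn
    have : ¬ i ≤ n := fun h => hn ⟨n - i, by simp [h]⟩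
    simp [taylorCoeff, this]

theorem hasSum_real_exp (x : ℝ) : HasSum (fun l : ℕ => x ^ l / (l.factorial : ℝ)) (Real.exp x) := by
  rw [Real.exp_eq_exp_ℝ]
  exact NormedSpace.expSeries_div_hasSum_exp x

theorem hasSum_taylorCoeff (i j : ℕ) (r : ℝ) :
    HasSum (fun n => taylorCoeff i j n * r ^ n) (r ^ i * Real.exp (j * r)) := by
  rw [hasSum_taylorCoeff_mul_iff]
  refine ((hasSum_real_exp (j * r)).mul_left (r ^ i)).congr_fun ?_
  intro l
  rw [pow_add, mul_pow]
  ring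

theorem hasSum_exp_choose (j s k : ℕ) :
    HasSum (fun l => (j : ℝ) ^ l / (l.factorial : ℝ) * ((l.choose k : ℝ) * (s : ℝ) ^ (l - k)))
      ((j : ℝ) ^ k / (k.factorial : ℝ) * Real.exp (j * s)) := by
  rw [← Function.Injective.hasSum_iff (add_right_injective k)]
  · refine ((hasSum_real_exp (j * s)).mul_left _).congr_fun ?_
    intro l
    have h1 : ((k + l).factorial : ℝ) = (k + l).choose k * k.factorial * l.factorial := by
      rw [Nat.choose_symm_add]
      exact_mod_cast (Nat.add_choose_mul_factorial_mul_factorial k l).symm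
    have h2 : ((k + l).choose k : ℝ) ≠ 0 := by
      exact_mod_cast (Nat.choose_pos (Nat.le_add_right k l)).ne'
    have h3 : (k.factorial : ℝ) ≠ 0 := by exact_mod_cast k.factorial_ne_zero
    have h4 : (l.factorial : ℝ) ≠ 0 := by exact_mod_cast l.factorial_ne_zero
    simp only [Function.comp_def]
    rw [h1, Nat.add_sub_cancel_left, pow_add, mul_pow]
    field_simp
  · intro n hn
    have : ¬ k ≤ n := fun h => hn ⟨n - k, by simp [h]⟩
    simp [Nat.choose_eq_zero_of_lt (not_le.mp this)]

/-- The `t`-th derivative at `s` of `z ^ i * exp (j * z)`, divided by `t!`, computed from the Taylor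
expansion at `0` on the left and directly on the right. -/
theorem hasSum_taylorCoeff_deriv (i j s t : ℕ) :
    HasSum (fun n => taylorCoeff i j n * ((n.choose t : ℝ) * (s : ℝ) ^ (n - t)))
      ((derivCoeff i j s t : ℝ) * Real.exp (j * s) / (t.factorial : ℝ)) := by
  rw [hasSum_taylorCoeff_mul_iff]
  have h1 : HasSum (fun l => ∑ k ∈ Finset.HasAntidiagonal.antidiagonal t,
      ((i.choose k.1 : ℝ) * (s : ℝ) ^ (i - k.1)) *
        ((j : ℝ) ^ l / (l.factorial : ℝ) * ((l.choose k.2 : ℝ) * (s : ℝ) ^ (l - k.2))))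
      (∑ k ∈ Finset.HasAntidiagonal.antidiagonal t, ((i.choose k.1 : ℝ) * (s : ℝ) ^ (i - k.1)) *
        ((j : ℝ) ^ k.2 / (k.2.factorial : ℝ) * Real.exp (j * s))) :=
    hasSum_sum fun k _ => (hasSum_exp_choose j s k.2).mul_left _
  convert h1 using 1
  · funext l
    rw [Nat.add_choose_eq]
    push_cast
    rw [Finset.sum_mul, Finset.mul_sum]
    refine Finset.sum_congr rfl fun k hk => ?_
    have hk' : k.1 + k.2 = t := by simpa using hk
    by_cases hi : k.1 ≤ i
    · by_cases hl : k.2 ≤ l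
      · have : i + l - t = (i - k.1) + (l - k.2) := by omega
        rw [this, pow_add]
        ring
      · simp [Nat.choose_eq_zero_of_lt (not_le.mp hl)]
    · simp [Nat.choose_eq_zero_of_lt (not_le.mp hi)]
  · rw [derivCoeff]
    push_cast
    rw [Finset.sum_mul, Finset.sum_div]
    refine Finset.sum_congr rfl fun k hk => ?_
    have hk' : k.1 + k.2 = t := by simpa using hk
    have h2 : (t.factorial : ℝ) = k.2.factorial * t.descFactorial k.1 := by
      have := Nat.factorial_mul_descFactorial (n := t) (k := k.1) (by omega)
      rw [show t - k.1 = k.2 by omega] at this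
      exact_mod_cast this.symm
    have h3 : (k.2.factorial : ℝ) ≠ 0 := by exact_mod_cast Nat.factorial_ne_zero _
    have h4 : (t.descFactorial k.1 : ℝ) ≠ 0 := by
      have h5 : t.descFactorial k.1 ≠ 0 := by
        rw [Ne, Nat.descFactorial_eq_zero_iff_lt]; omega
      exact_mod_cast h5
    rw [h2]
    field_simp

theorem choose_mul_pow_le (n t s S : ℕ) (hs : s < S) : n.choose t * s ^ (n - t) ≤ S ^ n := by
  by_cases ht : t ≤ n
  · calc n.choose t * s ^ (n - t) ≤ (s + 1) ^ n := by
          rw [add_pow]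
          have := Finset.single_le_sum (f := fun m => s ^ m * 1 ^ (n - m) * n.choose m)
            (fun _ _ => Nat.zero_le _) (Finset.mem_range.mpr (show n - t < n + 1 by omega))
          simp only [one_pow, mul_one] at this ⊢
          rw [Nat.choose_symm ht] at this
          rwa [mul_comm]
      _ ≤ S ^ n := Nat.pow_le_pow_left hs n
  · simp [Nat.choose_eq_zero_of_lt (not_le.mp ht)]

theorem derivCoeff_le (i j s t S T I : ℕ) (hs : s < S) (ht : t ≤ T) (hj : j ≤ T) (hT : 1 ≤ T)
    (hi : i ≤ I) : derivCoeff i j s t ≤ T ^ T * S ^ I := by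
  have h1 : derivCoeff i j s t ≤
      ∑ k ∈ Finset.HasAntidiagonal.antidiagonal t, T ^ t * (i.choose k.1 * s ^ (i - k.1)) := by
    refine Finset.sum_le_sum fun k hk => ?_
    have hk' : k.1 + k.2 = t := by simpa using hk
    calc t.descFactorial k.1 * i.choose k.1 * s ^ (i - k.1) * j ^ k.2
        ≤ T ^ k.1 * i.choose k.1 * s ^ (i - k.1) * T ^ k.2 := by
          gcongr
          exact (Nat.descFactorial_le_pow _ _).trans (Nat.pow_le_pow_left ht _)
      _ = T ^ t * (i.choose k.1 * s ^ (i - k.1)) := by rw [← hk', pow_add]; ring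
  have h2 : ∑ k ∈ Finset.HasAntidiagonal.antidiagonal t, (i.choose k.1 * s ^ (i - k.1)) ≤
      (s + 1) ^ i := by
    rw [Finset.Nat.sum_antidiagonal_eq_sum_range_succ_mk, add_comm s 1, add_pow]
    simp only [one_pow, one_mul]
    calc ∑ k ∈ Finset.range t.succ, i.choose k * s ^ (i - k)
        ≤ ∑ k ∈ Finset.range (t.succ + (i + 1)), i.choose k * s ^ (i - k) :=
          Finset.sum_le_sum_of_subset (Finset.range_mono (by omega))
      _ = ∑ k ∈ Finset.range (i + 1), i.choose k * s ^ (i - k) := by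
          refine (Finset.sum_subset (Finset.range_mono (by omega)) fun k _ hk => ?_).symm
          simp [Nat.choose_eq_zero_of_lt (show i < k by simpa using hk)]
      _ ≤ _ := le_of_eq (Finset.sum_congr rfl fun k _ => mul_comm _ _)
  calc derivCoeff i j s t ≤ T ^ t * (s + 1) ^ i := by
        rw [← Finset.mul_sum] at h1
        exact h1.trans (Nat.mul_le_mul_left _ h2)
    _ ≤ T ^ T * S ^ i := Nat.mul_le_mul (Nat.pow_le_pow_right hT ht) (Nat.pow_le_pow_left hs i)
    _ ≤ T ^ T * S ^ I := Nat.mul_le_mul_left _ (Nat.pow_le_pow_right (by omega) hi)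

/-! ### The auxiliary function -/

/-- Integers `p` not all zero such that the function
`∑ p (i, j, k) * e ^ k * z ^ i * exp (j * z)` has small derivatives at the integer points
`0 ≤ s < S`. The first `M` Taylor coefficients at `0` are made small by the box principle, and the
remaining ones are small by comparison with the size of the function on a disc of radius `ρ * S`. -/
theorem exists_auxiliary (I J S T d M X : ℕ) (ρ : ℝ) (hI : 1 ≤ I) (hJ : 1 ≤ J) (hd : 1 ≤ d)
    (hS : 1 ≤ S) (hX : 1 ≤ X) (hρ : 1 ≤ ρ) (hcard : I * J * d = 2 * d * M) :
    ∃ p : Fin I × Fin J × Fin d → ℤ, p ≠ 0 ∧ (∀ x, |p x| ≤ X) ∧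
      ∀ s < S, ∀ t < T, |∑ x, (p x : ℝ) * (derivCoeff x.1 x.2.1 s t : ℝ) *
        Real.exp 1 ^ ((x.2.2 : ℕ) + (x.2.1 : ℕ) * s)| ≤
        ((I * J * d : ℕ) : ℝ) * X * T ^ T * S ^ I * Real.exp 1 ^ d *
          (M * Real.exp (J * S) / X ^ (2 * d) + ρ ^ I * Real.exp (J * S * ρ) / ρ ^ M) := by
  have hne : Nonempty (Fin I × Fin J × Fin d) := ⟨⟨0, hI⟩, ⟨0, hJ⟩, ⟨0, hd⟩⟩
  set e : ℝ := Real.exp 1 with he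
  have he1 : 1 < e := by rw [he]; exact Real.one_lt_exp_iff.mpr one_pos
  have he0 : 0 < e := one_pos.trans he1
  have hS1 : (1 : ℝ) ≤ S := by exact_mod_cast hS
  have hρ0 : 0 < ρ := one_pos.trans_le hρ
  have hX0 : (0 : ℝ) < X := by exact_mod_cast hX
  -- a uniform bound for one term of the function and of its Taylor series
  have hbound : ∀ (x : Fin I × Fin J × Fin d) (r : ℝ), 1 ≤ r →
      e ^ (x.2.2 : ℕ) * (r ^ (x.1 : ℕ) * Real.exp ((x.2.1 : ℕ) * r)) <
        e ^ d * (r ^ I * Real.exp (J * r)) := by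
    intro x r hr
    have h1 : e ^ (x.2.2 : ℕ) < e ^ d := pow_lt_pow_right₀ he1 x.2.2.2
    have h2 : r ^ (x.1 : ℕ) ≤ r ^ I := pow_le_pow_right₀ hr x.1.2.le
    have h3 : Real.exp ((x.2.1 : ℕ) * r) ≤ Real.exp (J * r) := by
      have : ((x.2.1 : ℕ) : ℝ) ≤ J := by exact_mod_cast x.2.1.2.le
      gcongr
    have h4 : 0 < r := one_pos.trans_le hr
    exact mul_lt_mul h1 (mul_le_mul h2 h3 (by positivity) (by positivity)) (by positivity)
      (by positivity)
  have hsum : ∀ (x : Fin I × Fin J × Fin d) (r : ℝ),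
      HasSum (fun n => e ^ (x.2.2 : ℕ) * (taylorCoeff x.1 x.2.1 n * r ^ n))
        (e ^ (x.2.2 : ℕ) * (r ^ (x.1 : ℕ) * Real.exp ((x.2.1 : ℕ) * r))) :=
    fun x r => (hasSum_taylorCoeff _ _ _).mul_left _
  set B : ℝ := e ^ d * ((S : ℝ) ^ I * Real.exp (J * S)) with hB
  have hB0 : 0 < B := by positivity
  have hnn : ∀ (x : Fin I × Fin J × Fin d) (r : ℝ), 0 ≤ r → ∀ n,
      0 ≤ e ^ (x.2.2 : ℕ) * (taylorCoeff x.1 x.2.1 n * r ^ n) := fun x r hr n =>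
    mul_nonneg (by positivity) (mul_nonneg (taylorCoeff_nonneg _ _ _) (by positivity))
  obtain ⟨p, hp0, hpX, hp⟩ := exists_small_forms (ι := Fin I × Fin J × Fin d) M X (X ^ (2 * d))
    (fun n x => e ^ (x.2.2 : ℕ) * (taylorCoeff x.1 x.2.1 n * (S : ℝ) ^ (n : ℕ))) B
    (fun n x => hnn x S (by positivity) n)
    (fun n x => lt_of_le_of_lt
      (le_hasSum (hsum x S) (n : ℕ) fun m _ => hnn x S (by positivity) m) (hbound x S hS1))
    hB0 hX (Nat.one_le_pow _ _ hX) (by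
      have h1 : Fintype.card (Fin I × Fin J × Fin d) = 2 * d * M := by
        simp only [Fintype.card_prod, Fintype.card_fin]
        rw [← hcard, mul_assoc]
      rw [h1, ← pow_mul]
      have hM : M ≠ 0 := by
        rintro rfl
        have : 0 < I * J * d := by positivity
        omega
      exact Nat.pow_lt_pow_left (Nat.lt_succ_self X) (by positivity))
  refine ⟨p, hp0, hpX, ?_⟩
  have hcard' : (Fintype.card (Fin I × Fin J × Fin d) : ℝ) = ((I * J * d : ℕ) : ℝ) := by
    simp only [Fintype.card_prod, Fintype.card_fin]
    rw [mul_assoc]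
  rw [hcard'] at hp
  set u : ℝ := ((I * J * d : ℕ) : ℝ) with hu
  set δ : ℝ := u * X * B / ((X ^ (2 * d) : ℕ) : ℝ) with hδ
  have hu0 : 0 ≤ u := Nat.cast_nonneg _
  have hδ0 : 0 ≤ δ := by positivity
  intro s hs t ht
  have hpabs : ∀ x, |(p x : ℝ)| ≤ X := fun x => by exact_mod_cast hpX x
  -- the left side is a sum over the Taylor coefficients at the origin
  have hA : HasSum (fun n => ∑ x : Fin I × Fin J × Fin d, (p x : ℝ) * (e ^ (x.2.2 : ℕ) *
      (taylorCoeff x.1 x.2.1 n * ((n.choose t : ℝ) * (s : ℝ) ^ (n - t)))))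
      (∑ x : Fin I × Fin J × Fin d, (p x : ℝ) * (e ^ (x.2.2 : ℕ) *
        ((derivCoeff x.1 x.2.1 s t : ℝ) * Real.exp ((x.2.1 : ℕ) * s) / (t.factorial : ℝ)))) :=
    hasSum_sum fun x _ => ((hasSum_taylorCoeff_deriv _ _ _ _).mul_left _).mul_left _
  have hG1 : HasSum (fun n : ℕ => if n ∈ Finset.range M then δ else 0) (M * δ) := by
    have := hasSum_sum_of_ne_finset_zero (L := SummationFilter.unconditional ℕ)
      (f := fun n : ℕ => if n ∈ Finset.range M then δ else 0)
      (s := Finset.range M) (fun n hn => by rw [if_neg hn])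
    rwa [Finset.sum_congr rfl (fun n hn => if_pos hn), Finset.sum_const, Finset.card_range,
      nsmul_eq_mul] at this
  have hG2 : HasSum (fun n => (∑ x : Fin I × Fin J × Fin d, |(p x : ℝ)| * (e ^ (x.2.2 : ℕ) *
      (taylorCoeff x.1 x.2.1 n * (ρ * S) ^ n))) / ρ ^ M)
      ((∑ x : Fin I × Fin J × Fin d, |(p x : ℝ)| * (e ^ (x.2.2 : ℕ) *
        ((ρ * S) ^ (x.1 : ℕ) * Real.exp ((x.2.1 : ℕ) * (ρ * S))))) / ρ ^ M) :=
    (hasSum_sum fun x _ => (hsum x (ρ * S)).mul_left _).div_const _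
  have hw : ∀ n, (n.choose t : ℝ) * (s : ℝ) ^ (n - t) ≤ (S : ℝ) ^ n := fun n => by
    exact_mod_cast choose_mul_pow_le n t s S hs
  have hmain := hA.norm_le_of_bounded (hG1.add hG2) (by
    intro n
    have hfac : ∑ x : Fin I × Fin J × Fin d, (p x : ℝ) * (e ^ (x.2.2 : ℕ) *
        (taylorCoeff x.1 x.2.1 n * ((n.choose t : ℝ) * (s : ℝ) ^ (n - t)))) =
        (∑ x : Fin I × Fin J × Fin d, (p x : ℝ) * (e ^ (x.2.2 : ℕ) * taylorCoeff x.1 x.2.1 n)) *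
          ((n.choose t : ℝ) * (s : ℝ) ^ (n - t)) := by
      rw [Finset.sum_mul]
      exact Finset.sum_congr rfl fun x _ => by ring
    have hle : |∑ x : Fin I × Fin J × Fin d, (p x : ℝ) * (e ^ (x.2.2 : ℕ) *
        (taylorCoeff x.1 x.2.1 n * ((n.choose t : ℝ) * (s : ℝ) ^ (n - t))))| ≤
        |∑ x : Fin I × Fin J × Fin d, (p x : ℝ) * (e ^ (x.2.2 : ℕ) *
          (taylorCoeff x.1 x.2.1 n * (S : ℝ) ^ n))| := by
      have h2 : ∑ x : Fin I × Fin J × Fin d, (p x : ℝ) * (e ^ (x.2.2 : ℕ) *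
          (taylorCoeff x.1 x.2.1 n * (S : ℝ) ^ n)) =
          (∑ x : Fin I × Fin J × Fin d, (p x : ℝ) * (e ^ (x.2.2 : ℕ) *
            taylorCoeff x.1 x.2.1 n)) * (S : ℝ) ^ n := by
        rw [Finset.sum_mul]
        exact Finset.sum_congr rfl fun x _ => by ring
      rw [hfac, h2, abs_mul, abs_mul _ ((S : ℝ) ^ n)]
      refine mul_le_mul_of_nonneg_left ?_ (abs_nonneg _)
      rw [abs_of_nonneg (by positivity), abs_of_nonneg (by positivity)]
      exact hw n
    rw [Real.norm_eq_abs]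
    refine hle.trans ?_
    have hg2 : 0 ≤ (∑ x : Fin I × Fin J × Fin d, |(p x : ℝ)| * (e ^ (x.2.2 : ℕ) *
        (taylorCoeff x.1 x.2.1 n * (ρ * S) ^ n))) / ρ ^ M :=
      div_nonneg (Finset.sum_nonneg fun x _ => mul_nonneg (abs_nonneg _)
        (hnn x (ρ * S) (by positivity) n)) (by positivity)
    by_cases hn : n < M
    · rw [if_pos (Finset.mem_range.mpr hn)]
      have := hp ⟨n, hn⟩
      linarith
    · rw [if_neg (by simpa using hn), zero_add, le_div_iff₀ (by positivity)]
      refine (mul_le_mul_of_nonneg_right (Finset.abs_sum_le_sum_abs _ _) (by positivity)).trans ?_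
      rw [Finset.sum_mul]
      refine Finset.sum_le_sum fun x _ => ?_
      rw [abs_mul, abs_of_nonneg (hnn x S (by positivity) n), mul_pow]
      have h3 : ρ ^ M ≤ ρ ^ n := pow_le_pow_right₀ hρ (not_lt.mp hn)
      have h4 := mul_le_mul_of_nonneg_left h3
        (mul_nonneg (abs_nonneg (p x : ℝ)) (hnn x S (by positivity) n))
      refine h4.trans (le_of_eq ?_)
      ring)
  have htf : (0 : ℝ) < (t.factorial : ℝ) := by exact_mod_cast t.factorial_pos
  have hLHS : ∑ x : Fin I × Fin J × Fin d, (p x : ℝ) * (derivCoeff x.1 x.2.1 s t : ℝ) *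
        e ^ ((x.2.2 : ℕ) + (x.2.1 : ℕ) * s) = (t.factorial : ℝ) *
      ∑ x : Fin I × Fin J × Fin d, (p x : ℝ) * (e ^ (x.2.2 : ℕ) *
        ((derivCoeff x.1 x.2.1 s t : ℝ) * Real.exp ((x.2.1 : ℕ) * s) / (t.factorial : ℝ))) := by
    rw [Finset.mul_sum]
    refine Finset.sum_congr rfl fun x _ => ?_
    have : Real.exp ((x.2.1 : ℕ) * s) = e ^ ((x.2.1 : ℕ) * s) := by
      rw [he, ← Real.exp_nat_mul]
      push_cast
      ring_nf
    rw [this, pow_add]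
    field_simp
  rw [hLHS, abs_mul, abs_of_pos htf]
  have hG2le : (∑ x : Fin I × Fin J × Fin d, |(p x : ℝ)| * (e ^ (x.2.2 : ℕ) *
      ((ρ * S) ^ (x.1 : ℕ) * Real.exp ((x.2.1 : ℕ) * (ρ * S))))) ≤
      u * (X * (e ^ d * ((ρ * S) ^ I * Real.exp (J * (ρ * S))))) := by
    rw [← hcard', ← nsmul_eq_mul]
    refine Finset.sum_le_card_nsmul _ _ _ fun x _ => ?_
    refine mul_le_mul (hpabs x) (hbound x (ρ * S) ?_).le (by positivity) (by positivity)
    nlinarith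
  have htT : (t.factorial : ℝ) ≤ (T : ℝ) ^ T := by
    have : t.factorial ≤ T ^ T :=
      (Nat.factorial_le ht.le).trans (Nat.factorial_le_pow T)
    exact_mod_cast this
  rw [Real.norm_eq_abs] at hmain
  calc _ ≤ (T : ℝ) ^ T * (M * δ +
        u * (X * (e ^ d * ((ρ * S) ^ I * Real.exp (J * (ρ * S))))) / ρ ^ M) := by
        refine mul_le_mul htT (hmain.trans ?_) (abs_nonneg _) (by positivity)
        gcongr
    _ = _ := by
        rw [hδ, hB, mul_pow, show (J : ℝ) * (ρ * S) = J * S * ρ by ring]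
        push_cast
        ring

/-! ### The arithmetic inequality for irreducible polynomials -/

theorem polyLength_sum_le {ι : Type*} (s : Finset ι) (a : ι → ℤ) (n : ι → ℕ) :
    polyLength (∑ x ∈ s, C (a x) * X ^ n x) ≤ ∑ x ∈ s, (|a x| : ℝ) := by
  unfold polyLength
  set N := (∑ x ∈ s, C (a x) * X ^ n x : ℤ[X]).natDegree + 1
  calc ∑ i ∈ Finset.range N, (|(∑ x ∈ s, C (a x) * X ^ n x : ℤ[X]).coeff i| : ℝ)
      ≤ ∑ i ∈ Finset.range N, ∑ x ∈ s, if i = n x then (|a x| : ℝ) else 0 := by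
        refine Finset.sum_le_sum fun i _ => ?_
        rw [finsetSum_coeff]
        push_cast
        refine (Finset.abs_sum_le_sum_abs _ _).trans (Finset.sum_le_sum fun x _ => ?_)
        rw [coeff_C_mul_X_pow]
        split_ifs <;> simp
    _ = ∑ x ∈ s, ∑ i ∈ Finset.range N, if i = n x then (|a x| : ℝ) else 0 := Finset.sum_comm
    _ ≤ ∑ x ∈ s, (|a x| : ℝ) := by
        refine Finset.sum_le_sum fun x _ => ?_
        rw [Finset.sum_ite_eq']
        split_ifs <;> simp

/-- Combination of the auxiliary function, the zero estimate at a root of `P`, and the resultant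
inequality at the point `e`. -/
theorem one_le_of_irreducible (P : ℤ[X]) (hirr : Irreducible P) (h0 : P.coeff 0 ≠ 0) (d : ℕ)
    (hdeg : P.natDegree = d) (hd : 1 ≤ d) (L : ℝ) (hL : polyLength P ≤ L) (hL1 : 1 ≤ L)
    (I J S T M N : ℕ) (ρ Y : ℝ) (hI : 1 ≤ I) (hdJ : d ≤ J) (hJT : J ≤ T)
    (hS : 1 ≤ S) (hN : 1 ≤ N) (hρ : 1 ≤ ρ) (hcard : I * J * d = 2 * d * M)
    (hST : J * (I - 1) < S * (T - (J - 1)))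
    (hY : Y = ((I * J * d : ℕ) : ℝ) * N * T ^ T * S ^ I) :
    1 ≤ |aeval (Real.exp 1) P| * ((J * S : ℕ) * Real.exp 1 ^ (J * S) * L ^ (J * S) * Y ^ d) +
      d * Real.exp 1 ^ (2 * d) * L ^ (J * S) * Y ^ d *
        (M * Real.exp (J * S) / N ^ (2 * d) + ρ ^ I * Real.exp (J * S * ρ) / ρ ^ M) := by
  have hJ : 1 ≤ J := hd.trans hdJ
  have hT : 1 ≤ T := hJ.trans hJT
  obtain ⟨p, hp0, hpN, hp⟩ := exists_auxiliary I J S T d M N ρ hI hJ hd hS hN hρ hcard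
  set f : ℚ[X] := P.map (Int.castRingHom ℚ) with hf
  have hinj : Function.Injective (Int.castRingHom ℚ) := Int.cast_injective
  have hfirr : Irreducible f :=
    (IsPrimitive.Int.irreducible_iff_irreducible_map_cast (hirr.isPrimitive (by omega))).mp hirr
  have hfdeg : f.natDegree = d := by rw [hf, natDegree_map_eq_of_injective hinj, hdeg]
  have : Fact (Irreducible f) := ⟨hfirr⟩
  have : CharZero (AdjoinRoot f) := algebraRat.charZero _
  set α : AdjoinRoot f := AdjoinRoot.root f with hα
  have hα0 : α ≠ 0 := by
    intro h
    rw [hα, ← AdjoinRoot.mk_X, AdjoinRoot.mk_eq_zero] at h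
    have h1 := hfirr.dvd_symm irreducible_X h
    rw [X_dvd_iff, hf, coeff_map] at h1
    exact h0 (by simpa using h1)
  obtain ⟨x₀, hx₀⟩ : ∃ x, p x ≠ 0 := Function.ne_iff.mp hp0
  -- the coefficient polynomials in `e` do not vanish at the root `α`, having degree below `d`
  have hcoeff : ∑ k : Fin d, (p (x₀.1, x₀.2.1, k) : AdjoinRoot f) * α ^ (k : ℕ) ≠ 0 := by
    intro h
    set R : ℚ[X] := ∑ k : Fin d, C (p (x₀.1, x₀.2.1, k) : ℚ) * X ^ (k : ℕ) with hR
    have h1 : AdjoinRoot.mk f R = 0 := by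
      rw [← h, hR, map_sum]
      refine Finset.sum_congr rfl fun k _ => ?_
      rw [map_mul, map_pow, AdjoinRoot.mk_X, AdjoinRoot.mk_C, map_intCast]
    rw [AdjoinRoot.mk_eq_zero] at h1
    have h2 : R.natDegree < f.natDegree := by
      rw [hfdeg]
      refine lt_of_le_of_lt (natDegree_sum_le_of_forall_le (n := d - 1) _ _ fun k _ => ?_)
        (by omega)
      exact (natDegree_C_mul_X_pow_le _ _).trans (by omega)
    have h3 := eq_zero_of_dvd_of_natDegree_lt h1 h2
    have h4 : R.coeff (x₀.2.2 : ℕ) = p x₀ := by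
      rw [hR, finsetSum_coeff]
      simp only [coeff_C_mul_X_pow]
      rw [Finset.sum_eq_single x₀.2.2]
      · simp
      · intro b _ hb
        rw [if_neg]
        exact fun h => hb (Fin.ext h.symm)
      · simp
    rw [h3, coeff_zero] at h4
    exact hx₀ (by exact_mod_cast h4.symm)
  obtain ⟨s, hs, t, ht, hst⟩ := zero_estimate I J S T α hα0
    (fun i j => ∑ k : Fin d, (p (i, j, k) : AdjoinRoot f) * α ^ (k : ℕ)) ⟨_, _, hcoeff⟩ hST
  set Q : ℤ[X] := ∑ x : Fin I × Fin J × Fin d,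
    C (p x * (derivCoeff x.1 x.2.1 s t : ℤ)) * X ^ ((x.2.2 : ℕ) + (x.2.1 : ℕ) * s) with hQ
  have hQα : AdjoinRoot.mk f (Q.map (Int.castRingHom ℚ)) ≠ 0 := by
    convert hst using 1
    rw [hQ, Polynomial.map_sum, map_sum, Fintype.sum_prod_type]
    refine Finset.sum_congr rfl fun i _ => ?_
    rw [Fintype.sum_prod_type]
    refine Finset.sum_congr rfl fun j _ => ?_
    rw [Finset.sum_mul, Finset.sum_mul]
    refine Finset.sum_congr rfl fun k _ => ?_
    simp only [Polynomial.map_mul, Polynomial.map_pow, map_X, map_mul, map_pow,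
      AdjoinRoot.mk_X, map_natCast, Polynomial.map_natCast, eq_intCast, Polynomial.map_intCast,
      map_intCast]
    rw [← hα, pow_add]
    ring
  have hres : resultant P Q ≠ 0 := by
    intro h
    have h1 := resultant_map_map P Q P.natDegree Q.natDegree (Int.castRingHom ℚ)
    rw [h, map_zero, ← natDegree_map_eq_of_injective hinj P,
      ← natDegree_map_eq_of_injective hinj Q] at h1
    refine resultant_ne_zero _ _ (hfirr.coprime_iff_not_dvd.mpr ?_) h1
    rwa [← AdjoinRoot.mk_eq_zero]
  have hQeval : aeval (Real.exp 1) Q = ∑ x : Fin I × Fin J × Fin d, (p x : ℝ) *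
      (derivCoeff x.1 x.2.1 s t : ℝ) * Real.exp 1 ^ ((x.2.2 : ℕ) + (x.2.1 : ℕ) * s) := by
    rw [hQ, map_sum]
    refine Finset.sum_congr rfl fun x _ => ?_
    simp
  have hQdeg : Q.natDegree ≤ J * S := by
    refine natDegree_sum_le_of_forall_le _ _ fun x _ => ?_
    refine (natDegree_C_mul_X_pow_le _ _).trans ?_
    have h1 := x.2.2.2
    have h2 := x.2.1.2
    calc (x.2.2 : ℕ) + (x.2.1 : ℕ) * s ≤ J + (x.2.1 : ℕ) * (S - 1) :=
          Nat.add_le_add (by omega) (Nat.mul_le_mul_left _ (by omega))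
      _ ≤ J + J * (S - 1) := Nat.add_le_add_left (Nat.mul_le_mul_right _ h2.le) _
      _ = J * S := by
          obtain ⟨S', rfl⟩ := Nat.exists_eq_add_of_le hS
          simp
          ring
  have hQlen : polyLength Q ≤ Y := by
    refine (polyLength_sum_le _ _ _).trans ?_
    have h1 : ∀ x ∈ (Finset.univ : Finset (Fin I × Fin J × Fin d)),
        (|((p x * (derivCoeff x.1 x.2.1 s t : ℤ) : ℤ) : ℝ)|) ≤ N * ((T : ℝ) ^ T * S ^ I) := by
      intro x _
      push_cast
      rw [abs_mul, Nat.abs_cast]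
      have h2 : |(p x : ℝ)| ≤ N := by exact_mod_cast hpN x
      have h3 : (derivCoeff x.1 x.2.1 s t : ℝ) ≤ (T : ℝ) ^ T * S ^ I := by
        exact_mod_cast derivCoeff_le x.1 x.2.1 s t S T I hs ht.le (x.2.1.2.le.trans hJT) hT
          x.1.2.le
      exact mul_le_mul h2 h3 (by positivity) (by positivity)
    refine (Finset.sum_le_card_nsmul _ _ _ h1).trans (le_of_eq ?_)
    rw [hY, nsmul_eq_mul, Finset.card_univ]
    simp only [Fintype.card_prod, Fintype.card_fin]
    push_cast
    ring
  have hY1 : 1 ≤ Y := by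
    have h1 : 1 ≤ I * J * d * N * T ^ T * S ^ I := Nat.one_le_iff_ne_zero.mpr (by positivity)
    rw [hY]
    exact_mod_cast h1
  have hmain := one_le_of_resultant_ne_zero P Q hres (Real.exp 1)
    (Real.one_le_exp zero_le_one) L Y hL hL1 hQlen hY1 (J * S) hQdeg (by omega)
  rw [hdeg, hQeval] at hmain
  have hε := hp s hs t ht
  rw [← hY] at hε
  refine hmain.trans (add_le_add le_rfl ?_)
  refine (mul_le_mul_of_nonneg_right hε (by positivity)).trans (le_of_eq ?_)
  obtain ⟨d', rfl⟩ := Nat.exists_eq_add_of_le' hd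
  simp only [Nat.add_sub_cancel]
  ring

/-! ### Choice of the parameters -/

/-- The two numerical inequalities behind the choice of parameters. Here `D` is the degree, `l` the
logarithm of the length, `E` the logarithm of `ρ = 20 (l + 3 D)`, `A` is close to
`70 (l + 3 D) / E`, and `y` is the logarithm of the length of the auxiliary polynomial. -/
theorem parameter_inequalities (D l E A y : ℝ) (hD : 1 ≤ D) (hl : 0 ≤ l) (hE : 0 ≤ E) (hA : 0 ≤ A)
    (h1 : 70 * (l + 3 * D) ≤ A * E) (h2 : A * E ≤ 70 * (l + 3 * D) + E)
    (h3 : E ≤ 3.1 + (l + 3 * D) / 3)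
    (hy : y ≤ 18 * E + 240 * D * (A * E) + 160 * D * E + 3 + 1600 * D * (1 + l)) :
    E + 2 * D + 1600 * D ^ 2 * l + D * y + 1600 * D ^ 2 * (20 * (l + 3 * D)) ≤
        (800 * D ^ 2 * A - 40 * D * A) * E ∧
      6 * E + 1600 * D ^ 2 * (1 + l) + D * y ≤ 20142 * D ^ 2 * (l + 3 * D) := by
  have hD0 : 0 ≤ D := by linarith
  have hDD : D ≤ D ^ 2 := by nlinarith
  have hD1 : 1 ≤ D ^ 2 := by nlinarith
  have hAE : 0 ≤ A * E := mul_nonneg hA hE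
  have a1 : E ≤ D ^ 2 * E := le_mul_of_one_le_left hE hD1
  have a2 : D * E ≤ D ^ 2 * E := mul_le_mul_of_nonneg_right hDD hE
  have a3 : D * (A * E) ≤ D ^ 2 * (A * E) := mul_le_mul_of_nonneg_right hDD hAE
  have hDy : D * y ≤ D ^ 2 * (178 * E + 3 + 240 * (A * E) + 1600 * (1 + l)) := by
    have := mul_le_mul_of_nonneg_left hy hD0
    nlinarith
  constructor
  · have key : 179 * E + 5 + 1600 * l + 1600 * (1 + l) + 240 * (A * E) + 32000 * (l + 3 * D) ≤
        760 * (A * E) := by linarith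
    have := mul_le_mul_of_nonneg_left key (sq_nonneg D)
    nlinarith
  · have key : 184 * E + 3 + 1600 * (1 + l) + 1600 * (1 + l) + 240 * (A * E) ≤
        20142 * (l + 3 * D) := by linarith
    have := mul_le_mul_of_nonneg_left key (sq_nonneg D)
    nlinarith

theorem log_sixty_bounds : 4 ≤ Real.log 60 ∧ Real.log 60 ≤ 4.1 := by
  constructor
  · rw [Real.le_log_iff_exp_le (by norm_num)]
    have h1 := Real.exp_one_lt_d9
    calc Real.exp 4 = Real.exp 1 ^ 4 := by rw [← Real.exp_nat_mul]; norm_num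
      _ ≤ 2.7182818286 ^ 4 := by gcongr
      _ ≤ 60 := by norm_num
  · rw [Real.log_le_iff_le_exp (by norm_num)]
    have h1 := Real.exp_one_gt_d9
    have h2 : (2.7182818283 : ℝ) ^ 41 ≤ Real.exp 4.1 ^ 10 := by
      calc (2.7182818283 : ℝ) ^ 41 ≤ Real.exp 1 ^ 41 := by gcongr
        _ = Real.exp 4.1 ^ 10 := by
          rw [← Real.exp_nat_mul, ← Real.exp_nat_mul]; norm_num
    have h3 : (60 : ℝ) ^ 10 ≤ Real.exp 4.1 ^ 10 := le_trans (by norm_num) h2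
    exact le_of_pow_le_pow_left₀ (by norm_num) (Real.exp_pos _).le h3

set_option maxHeartbeats 1000000 in
/-- The bound for irreducible polynomials. With `h = log L + 3 d`, `ρ = 20 h` and `A` close to
`70 h / log ρ`, the auxiliary function uses powers `z ^ i` with `i < I = 40 d A` and exponentials
`exp (j z)` with `j < J = 40 d`; it is considered at the points `0 ≤ s < S = 40 d` with
`T = 40 d (A + 1)` derivatives, and the first `M = I J / 2` Taylor coefficients are made small. -/
theorem exp_bound_of_irreducible (P : ℤ[X]) (hirr : Irreducible P) (h0 : P.coeff 0 ≠ 0) (d : ℕ)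
    (hdeg : P.natDegree = d) (hd : 1 ≤ d) (L : ℝ) (hL : polyLength P ≤ L) (hL1 : 1 ≤ L) :
    Real.exp (-(20142 * d ^ 2 * (Real.log L + 3 * d))) ≤ |aeval (Real.exp 1) P| := by
  set D : ℝ := (d : ℝ) with hDdef
  have hD : 1 ≤ D := by rw [hDdef]; exact_mod_cast hd
  set l := Real.log L with hl
  have hl0 : 0 ≤ l := Real.log_nonneg hL1
  set h : ℝ := l + 3 * D with hh
  have hh3 : 3 ≤ h := by linarith
  set ρ : ℝ := 20 * h with hρ
  set E : ℝ := Real.log ρ with hE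
  have hρ0 : 0 < ρ := by linarith
  obtain ⟨h60, h60'⟩ := log_sixty_bounds
  have hEsplit : E = Real.log 60 + Real.log (h / 3) := by
    rw [← Real.log_mul (by norm_num) (by positivity), hE, hρ]
    congr 1
    ring
  have hE4 : 4 ≤ E := by
    have : 0 ≤ Real.log (h / 3) := Real.log_nonneg (by linarith)
    linarith
  have hE3 : E ≤ 3.1 + h / 3 := by
    have := Real.log_le_sub_one_of_pos (show 0 < h / 3 by linarith)
    linarith
  set A : ℕ := ⌈70 * h / E⌉₊ with hA
  have hA1 : 70 * h ≤ A * E := by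
    have := Nat.le_ceil (70 * h / E)
    rwa [div_le_iff₀ (by linarith)] at this
  have hA2 : A * E ≤ 70 * h + E := by
    have := (Nat.ceil_lt_add_one (show 0 ≤ 70 * h / E by positivity)).le
    calc A * E ≤ (70 * h / E + 1) * E := mul_le_mul_of_nonneg_right this (by linarith)
      _ = 70 * h + E := by field_simp
  have hA0 : 1 ≤ A := Nat.one_le_ceil_iff.mpr (by positivity)
  have hA0' : (1 : ℝ) ≤ A := by exact_mod_cast hA0
  have hA18 : (A : ℝ) ≤ 18 * h := by nlinarith
  set J := 40 * d with hJ
  set I := J * A with hI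
  set T := J * (A + 1) with hT
  set M := 800 * d ^ 2 * A with hM
  have hJ1 : 1 ≤ J := by omega
  have hI1 : 1 ≤ I := Nat.one_le_iff_ne_zero.mpr (by positivity)
  have hT1 : 1 ≤ T := Nat.one_le_iff_ne_zero.mpr (by positivity)
  have hJR : (J : ℝ) = 40 * D := by rw [hJ]; push_cast; ring
  have hIR : (I : ℝ) = 40 * D * A := by rw [hI]; push_cast; rw [hJR]
  have hTR : (T : ℝ) = 40 * D * (A + 1) := by rw [hT]; push_cast; rw [hJR]
  have hMR : (M : ℝ) = 800 * D ^ 2 * A := by rw [hM]; push_cast; ring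
  have hT1' : (1 : ℝ) ≤ T := by exact_mod_cast hT1
  have hlogJ : Real.log J ≤ E := by
    refine Real.log_le_log (by rw [hJR]; positivity) ?_
    rw [hJR]
    linarith
  have hlogT : Real.log T ≤ 2 * E := by
    have h1 : (T : ℝ) ≤ ρ ^ 2 := by
      rw [hTR, hρ]
      have h2 : 3 * D ≤ h := by linarith
      have h3 : (3 * D) * (A + 1) ≤ h * (19 * h) :=
        mul_le_mul h2 (by linarith) (by positivity) (by linarith)
      nlinarith
    calc Real.log T ≤ Real.log (ρ ^ 2) := Real.log_le_log (by linarith) h1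
      _ = 2 * E := by rw [Real.log_pow]; norm_num [hE]
  have hcube : ∀ x : ℝ, 0 < x → x ≤ 64000 * D ^ 3 * A → Real.log x ≤ 6 * E := by
    intro x hx hxle
    have h1 : x ≤ (T : ℝ) ^ 3 := by
      refine hxle.trans ?_
      rw [hTR]
      have h2 : (A : ℝ) ≤ (A + 1) ^ 3 := by nlinarith [sq_nonneg (A : ℝ)]
      have h3 := mul_le_mul_of_nonneg_left h2 (show 0 ≤ 64000 * D ^ 3 by positivity)
      nlinarith
    calc Real.log x ≤ Real.log ((T : ℝ) ^ 3) := Real.log_le_log hx h1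
      _ = 3 * Real.log T := by rw [Real.log_pow]; norm_num
      _ ≤ 6 * E := by linarith
  have hD23 : D ^ 2 ≤ D ^ 3 := pow_le_pow_right₀ hD (by norm_num)
  have hD13 : D ≤ D ^ 3 := le_self_pow₀ hD (by norm_num)
  have hDA : D ^ 3 ≤ D ^ 3 * A := le_mul_of_one_le_right (by positivity) hA0'
  have hDA0 : 0 < D ^ 3 * A := by positivity
  set u : ℝ := ((I * J * d : ℕ) : ℝ) with hu
  have huR : u = 1600 * D ^ 3 * A := by rw [hu]; push_cast; rw [hIR, hJR]; ring
  set g : ℝ := 4 * D * M with hg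
  have hgR : g = 3200 * D ^ 3 * A := by rw [hg, hMR]; ring
  have hu0 : 0 < u := by rw [huR]; positivity
  have hg0 : 0 < g := by rw [hgR]; positivity
  have hlogu : Real.log u ≤ 6 * E := hcube u hu0 (by rw [huR]; linarith)
  have hlogg : Real.log g ≤ 6 * E := hcube g hg0 (by rw [hgR]; linarith)
  have hlogu0 : 0 ≤ Real.log u := Real.log_nonneg (by rw [huR]; linarith)
  have hlogg0 : 0 ≤ Real.log g := Real.log_nonneg (by rw [hgR]; linarith)
  have hlogT0 : 0 ≤ Real.log T := Real.log_nonneg hT1'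
  have hlogJ0 : 0 ≤ Real.log J := Real.log_nonneg (by exact_mod_cast hJ1)
  -- the coefficient bound `N`, chosen so that the box principle pays for the resultant
  set w : ℝ := Real.log g + Real.log u + T * Real.log T + I * Real.log J + 2 + 1600 * D * (1 + l)
    with hw
  have hw0 : 0 ≤ w := by positivity
  set N : ℕ := ⌈Real.exp w⌉₊ with hN
  have hNw : Real.exp w ≤ N := Nat.le_ceil _
  have hN0 : (0 : ℝ) < N := (Real.exp_pos _).trans_le hNw
  have hN1 : 1 ≤ N := by exact_mod_cast hN0
  set ν := Real.log N with hν
  have hν1 : w ≤ ν := (Real.le_log_iff_exp_le hN0).mpr hNw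
  have hν2 : ν ≤ w + 1 := by
    rw [hν, Real.log_le_iff_le_exp hN0, Real.exp_add]
    have h1 := (Nat.ceil_lt_add_one (Real.exp_pos w).le).le
    have h2 := Real.one_le_exp hw0
    have h3 : (2 : ℝ) ≤ Real.exp 1 := by linarith [Real.exp_one_gt_d9]
    have h4 := mul_le_mul_of_nonneg_left h3 (Real.exp_pos w).le
    linarith
  set y : ℝ := Real.log u + ν + T * Real.log T + I * Real.log J with hy
  have hyle : y ≤ 18 * E + 240 * D * (A * E) + 160 * D * E + 3 + 1600 * D * (1 + l) := by
    have h1 : T * Real.log T ≤ 40 * D * (A + 1) * (2 * E) := by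
      rw [← hTR]
      exact mul_le_mul_of_nonneg_left hlogT (by linarith)
    have h2 : I * Real.log J ≤ 40 * D * A * E := by
      rw [← hIR]
      exact mul_le_mul_of_nonneg_left hlogJ (by positivity)
    rw [hy]
    linarith
  obtain ⟨hp1, hp2⟩ := parameter_inequalities D l E A y hD hl0 (by linarith) (by linarith) hA1 hA2
    hE3 hyle
  have hYexp : Real.exp y = u * N * (T : ℝ) ^ T * (J : ℝ) ^ I := by
    have hT0 : (0 : ℝ) < T := by linarith
    have hJ0 : (0 : ℝ) < J := by exact_mod_cast hJ1
    rw [hy, Real.exp_add, Real.exp_add, Real.exp_add, Real.exp_log hu0, hν, Real.exp_log hN0,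
      Real.exp_nat_mul, Real.exp_nat_mul, Real.exp_log hT0, Real.exp_log hJ0]
  have hmain := one_le_of_irreducible P hirr h0 d hdeg hd L hL hL1 I J J T M N ρ (Real.exp y) hI1
    (by omega) (by rw [hT]; exact Nat.le_mul_of_pos_right _ (Nat.succ_pos A)) hJ1 hN1
    (by linarith) (by rw [hI, hJ, hM]; ring)
    (by
      refine Nat.mul_lt_mul_of_pos_left ?_ hJ1
      have : T = I + J := by rw [hT, hI]; ring
      omega) hYexp
  set q : ℕ := J * J with hq
  have hqR : (q : ℝ) = 1600 * D ^ 2 := by rw [hq]; push_cast; rw [hJR]; ring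
  have hJJ : (J : ℝ) * J = 1600 * D ^ 2 := by rw [hJR]; ring
  have hLexp : L ^ q = Real.exp (1600 * D ^ 2 * l) := by
    rw [← hqR, Real.exp_nat_mul, hl, Real.exp_log (by linarith)]
  have heq : Real.exp 1 ^ q = Real.exp (1600 * D ^ 2) := by
    rw [← hqR, ← Real.exp_nat_mul, mul_one]
  have he2 : Real.exp 1 ^ (2 * d) = Real.exp (2 * D) := by
    rw [← Real.exp_nat_mul]; push_cast; rw [mul_one]
  have hYd : Real.exp y ^ d = Real.exp (D * y) := by rw [← Real.exp_nat_mul]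
  have hNd : (N : ℝ) ^ (2 * d) = Real.exp (2 * D * ν) := by
    rw [hν, ← Real.exp_log hN0, ← Real.exp_nat_mul, Real.log_exp]; push_cast; rfl
  have hρI : ρ ^ I = Real.exp (40 * D * A * E) := by
    rw [← hIR, Real.exp_nat_mul, hE, Real.exp_log hρ0]
  have hρM : ρ ^ M = Real.exp (800 * D ^ 2 * A * E) := by
    rw [← hMR, Real.exp_nat_mul, hE, Real.exp_log hρ0]
  rw [hLexp, heq, he2, hYd, hNd, hρI, hρM, hJJ] at hmain
  have ht1 : D * Real.exp (2 * D) * Real.exp (1600 * D ^ 2 * l) * Real.exp (D * y) *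
      (M * Real.exp (1600 * D ^ 2) / Real.exp (2 * D * ν)) ≤ 1 / 4 := by
    have h1 : D * Real.exp (2 * D) * Real.exp (1600 * D ^ 2 * l) * Real.exp (D * y) *
      (M * Real.exp (1600 * D ^ 2) / Real.exp (2 * D * ν)) = 1 / 4 * Real.exp (Real.log g + 2 * D +
        1600 * D ^ 2 * l + D * y + 1600 * D ^ 2 - 2 * D * ν) := by
      rw [Real.exp_sub, Real.exp_add, Real.exp_add, Real.exp_add, Real.exp_add,
        Real.exp_log hg0, hg]
      ring
    rw [h1]
    have h2 : Real.exp (Real.log g + 2 * D +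
        1600 * D ^ 2 * l + D * y + 1600 * D ^ 2 - 2 * D * ν) ≤ 1 := by
      rw [Real.exp_le_one_iff]
      have h3 := mul_le_mul_of_nonneg_left hν1 (show 0 ≤ D by linarith)
      have h4 : Real.log g ≤ D * Real.log g := le_mul_of_one_le_left hlogg0 hD
      rw [hw] at h3
      rw [hy]
      linarith
    linarith
  have ht2 : D * Real.exp (2 * D) * Real.exp (1600 * D ^ 2 * l) * Real.exp (D * y) *
      (Real.exp (40 * D * A * E) * Real.exp (1600 * D ^ 2 * ρ) / Real.exp (800 * D ^ 2 * A * E)) ≤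
        1 / 4 := by
    have hlog4D : Real.log (4 * D) ≤ E := Real.log_le_log (by positivity) (by linarith)
    have h1 : D * Real.exp (2 * D) * Real.exp (1600 * D ^ 2 * l) * Real.exp (D * y) *
      (Real.exp (40 * D * A * E) * Real.exp (1600 * D ^ 2 * ρ) / Real.exp (800 * D ^ 2 * A * E)) =
        1 / 4 * Real.exp (Real.log (4 * D) + 2 * D + 1600 * D ^ 2 * l + D * y + 40 * D * A * E +
          1600 * D ^ 2 * ρ - 800 * D ^ 2 * A * E) := by
      rw [Real.exp_sub, Real.exp_add, Real.exp_add, Real.exp_add, Real.exp_add, Real.exp_add,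
        Real.exp_log (by positivity)]
      ring
    rw [h1]
    have h2 : Real.exp (Real.log (4 * D) + 2 * D + 1600 * D ^ 2 * l + D * y + 40 * D * A * E +
          1600 * D ^ 2 * ρ - 800 * D ^ 2 * A * E) ≤ 1 := by
      rw [Real.exp_le_one_iff, hρ]
      linarith
    linarith
  have hq0 : (0 : ℝ) < 2 * q := by rw [hqR]; positivity
  have hlogq : Real.log (2 * q) ≤ 6 * E := hcube _ hq0 (by rw [hqR]; linarith)
  have h1 : 1 / 2 ≤ |aeval (Real.exp 1) P| *
      (q * Real.exp (1600 * D ^ 2) * Real.exp (1600 * D ^ 2 * l) * Real.exp (D * y)) := by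
    rw [mul_add (D * Real.exp (2 * D) * Real.exp (1600 * D ^ 2 * l) * Real.exp (D * y))] at hmain
    linarith
  have h2 : (q * Real.exp (1600 * D ^ 2) * Real.exp (1600 * D ^ 2 * l) * Real.exp (D * y)) =
      1 / 2 * Real.exp (Real.log (2 * q) + 1600 * D ^ 2 + 1600 * D ^ 2 * l + D * y) := by
    rw [Real.exp_add, Real.exp_add, Real.exp_add, Real.exp_log hq0]
    ring
  rw [h2] at h1
  have h3 : 1 ≤ |aeval (Real.exp 1) P| *
      Real.exp (Real.log (2 * q) + 1600 * D ^ 2 + 1600 * D ^ 2 * l + D * y) := by linarith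
  have h4 : 1 ≤ |aeval (Real.exp 1) P| * Real.exp (20142 * D ^ 2 * h) := by
    refine h3.trans (mul_le_mul_of_nonneg_left (Real.exp_le_exp.mpr ?_) (abs_nonneg _))
    linarith
  rw [Real.exp_neg, inv_le_iff_one_le_mul₀ (Real.exp_pos _)]
  exact h4

/-! ### From irreducible polynomials to all polynomials -/

/-- The logarithmic Mahler measure of an integer polynomial. -/
noncomputable def logMahler (P : ℤ[X]) : ℝ := (P.map (Int.castRingHom ℂ)).logMahlerMeasure

theorem map_complex_ne_zero {P : ℤ[X]} (hP : P ≠ 0) : P.map (Int.castRingHom ℂ) ≠ 0 :=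
  (Polynomial.map_ne_zero_iff Int.cast_injective).mpr hP

theorem one_le_mahlerMeasure {P : ℤ[X]} (hP : P ≠ 0) :
    1 ≤ (P.map (Int.castRingHom ℂ)).mahlerMeasure := by
  refine one_le_mahlerMeasure_of_one_le_norm_leadingCoeff ?_
  rw [leadingCoeff_map_of_injective (RingHom.injective_int _)]
  have h1 : 1 ≤ |P.leadingCoeff| := Int.one_le_abs (leadingCoeff_ne_zero.mpr hP)
  rw [eq_intCast, Complex.norm_intCast]
  exact_mod_cast h1

theorem logMahler_nonneg {P : ℤ[X]} (hP : P ≠ 0) : 0 ≤ logMahler P := by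
  rw [logMahler, logMahlerMeasure_eq_log_MahlerMeasure]
  exact Real.log_nonneg (one_le_mahlerMeasure hP)

theorem logMahler_mul {P Q : ℤ[X]} (hP : P ≠ 0) (hQ : Q ≠ 0) :
    logMahler (P * Q) = logMahler P + logMahler Q := by
  rw [logMahler, Polynomial.map_mul, logMahlerMeasure_mul_eq_add_logMahlerMeasure
    (mul_ne_zero (map_complex_ne_zero hP) (map_complex_ne_zero hQ))]
  rfl

theorem logMahler_le_log {P : ℤ[X]} (hP : P ≠ 0) {L : ℝ} (hL : polyLength P ≤ L) :
    logMahler P ≤ Real.log L := by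
  rw [logMahler, logMahlerMeasure_eq_log_MahlerMeasure]
  refine Real.log_le_log (one_pos.trans_le (one_le_mahlerMeasure hP)) (le_trans ?_ hL)
  refine (mahlerMeasure_le_sum_norm_coeff _).trans (le_of_eq ?_)
  rw [sum_over_range _ (by simp), natDegree_map_eq_of_injective (RingHom.injective_int _),
    polyLength]
  refine Finset.sum_congr rfl fun i _ => ?_
  rw [coeff_map, eq_intCast, Complex.norm_intCast]

theorem polyLength_le_two_pow_mul (P : ℤ[X]) :
    polyLength P ≤ 2 ^ P.natDegree * (P.map (Int.castRingHom ℂ)).mahlerMeasure := by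
  have h1 : (2 : ℝ) ^ P.natDegree =
      ∑ i ∈ Finset.range (P.natDegree + 1), (P.natDegree.choose i : ℝ) := by
    exact_mod_cast (Nat.sum_range_choose P.natDegree).symm
  rw [h1, Finset.sum_mul, polyLength]
  refine Finset.sum_le_sum fun i _ => ?_
  have h2 := norm_coeff_le_choose_mul_mahlerMeasure i (P.map (Int.castRingHom ℂ))
  rwa [coeff_map, eq_intCast, Complex.norm_intCast,
    natDegree_map_eq_of_injective (RingHom.injective_int _)] at h2

theorem one_le_abs_of_natDegree_eq_zero {P : ℤ[X]} (hP : P ≠ 0) (h : P.natDegree = 0) :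
    1 ≤ |aeval (Real.exp 1) P| := by
  rw [eq_C_of_natDegree_eq_zero h] at hP ⊢
  have h0 : P.coeff 0 ≠ 0 := fun h0 => hP (by rw [h0, C_0])
  have h1 : 1 ≤ |P.coeff 0| := Int.one_le_abs h0
  rw [aeval_C]
  simp only [algebraMap_int_eq, eq_intCast]
  exact_mod_cast h1

theorem abs_aeval_ge_of_irreducible (P : ℤ[X]) (hP : Irreducible P) :
    Real.exp (-(130000 * P.natDegree ^ 2 * (logMahler P + P.natDegree))) ≤
      |aeval (Real.exp 1) P| := by
  have hm := logMahler_nonneg hP.ne_zero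
  have hexp : Real.exp (-(130000 * P.natDegree ^ 2 * (logMahler P + P.natDegree))) ≤ 1 := by
    rw [Real.exp_le_one_iff, neg_nonpos]
    positivity
  by_cases hd : P.natDegree = 0
  · exact hexp.trans (one_le_abs_of_natDegree_eq_zero hP.ne_zero hd)
  by_cases h0 : P.coeff 0 = 0
  · -- here `P` is an associate of `X`
    have hPX : P ∣ X := irreducible_X.dvd_symm hP (X_dvd_iff.mpr h0)
    have hXP : X ∣ P := X_dvd_iff.mpr h0
    obtain ⟨u, hu⟩ := associated_of_dvd_dvd hXP hPX
    have hu0 : ((u : ℤ[X])).natDegree = 0 := natDegree_eq_zero_of_isUnit u.isUnit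
    rw [← hu] at hexp ⊢
    refine hexp.trans ?_
    rw [map_mul, abs_mul, aeval_X, abs_of_pos (Real.exp_pos 1)]
    exact one_le_mul_of_one_le_of_one_le (Real.one_le_exp zero_le_one)
      (one_le_abs_of_natDegree_eq_zero u.ne_zero hu0)
  have hd1 : 1 ≤ P.natDegree := Nat.one_le_iff_ne_zero.mpr hd
  have hM := one_le_mahlerMeasure hP.ne_zero
  have hpow : (1 : ℝ) ≤ 2 ^ P.natDegree := one_le_pow₀ (by norm_num)
  refine le_trans (Real.exp_le_exp.mpr ?_)
    (exp_bound_of_irreducible P hP h0 P.natDegree rfl hd1 _ (polyLength_le_two_pow_mul P)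
      (one_le_mul_of_one_le_of_one_le hpow hM))
  rw [Real.log_mul (by positivity) (by positivity), Real.log_pow,
    ← logMahlerMeasure_eq_log_MahlerMeasure, ← logMahler, neg_le_neg_iff]
  have h2 := Real.log_two_lt_d9
  have hD : (0 : ℝ) ≤ P.natDegree := Nat.cast_nonneg _
  have h3 : 20142 * ((P.natDegree : ℝ) * Real.log 2 + logMahler P + 3 * P.natDegree) ≤
      130000 * (logMahler P + P.natDegree) := by nlinarith
  calc 20142 * (P.natDegree : ℝ) ^ 2 * ((P.natDegree : ℝ) * Real.log 2 + logMahler P +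
        3 * P.natDegree) = (P.natDegree : ℝ) ^ 2 *
        (20142 * ((P.natDegree : ℝ) * Real.log 2 + logMahler P + 3 * P.natDegree)) := by ring
    _ ≤ (P.natDegree : ℝ) ^ 2 * (130000 * (logMahler P + P.natDegree)) :=
        mul_le_mul_of_nonneg_left h3 (sq_nonneg _)
    _ = _ := by ring

/-- The bound in terms of the Mahler measure. Both the degree and the logarithmic Mahler measure are
additive, so the bound for a product follows from those for the factors. -/
theorem abs_aeval_ge (P : ℤ[X]) : P ≠ 0 →
    Real.exp (-(130000 * P.natDegree ^ 2 * (logMahler P + P.natDegree))) ≤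
      |aeval (Real.exp 1) P| := by
  induction P using WfDvdMonoid.induction_on_irreducible with
  | zero => exact fun h => absurd rfl h
  | unit u hu =>
    intro h
    have hd := natDegree_eq_zero_of_isUnit hu
    refine le_trans ?_ (one_le_abs_of_natDegree_eq_zero h hd)
    rw [hd]
    simp
  | mul a i ha hi ih =>
    intro _
    have h1 := abs_aeval_ge_of_irreducible i hi
    have h2 := ih ha
    have hma := logMahler_nonneg ha
    have hmi := logMahler_nonneg hi.ne_zero
    rw [map_mul, abs_mul, natDegree_mul hi.ne_zero ha, logMahler_mul hi.ne_zero ha]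
    refine le_trans ?_ (mul_le_mul h1 h2 (Real.exp_pos _).le (abs_nonneg _))
    rw [← Real.exp_add, Real.exp_le_exp]
    push_cast
    have h3 : (0 : ℝ) ≤ i.natDegree := Nat.cast_nonneg _
    have h4 : (0 : ℝ) ≤ a.natDegree := Nat.cast_nonneg _
    generalize (i.natDegree : ℝ) = x at *
    generalize (a.natDegree : ℝ) = y at *
    generalize logMahler i = m at *
    generalize logMahler a = n at *
    have h5 : (x + y) ^ 2 * (m + n + (x + y)) - x ^ 2 * (m + x) - y ^ 2 * (n + y) =
      x ^ 2 * n + x ^ 2 * y + (2 * x * y) * (m + n + x + y) + y ^ 2 * (m + x) := by ring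
    have h6 : 0 ≤ x ^ 2 * n + x ^ 2 * y + (2 * x * y) * (m + n + x + y) + y ^ 2 * (m + x) := by
      positivity
    linarith

/-- **Theorem 4, part 2.** For a nonzero `P ∈ ℤ[x]` with `deg P ≤ d`, `L(P) ≤ L`, `L ≥ 3`:
`|P(e)| ≥ exp(−1.3·10⁵ d² (log L + d))`. -/
theorem e_transcendence_measure (P : Polynomial ℤ) (hP : P ≠ 0)
    (d : ℕ) (hd : P.natDegree ≤ d)
    (L : ℝ) (hL : polyLength P ≤ L) (hL3 : 3 ≤ L) :
    Real.exp (-(130000 * d ^ 2 * (Real.log L + d))) ≤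
      |Polynomial.aeval (Real.exp 1) P| := by
  refine le_trans (Real.exp_le_exp.mpr ?_) (abs_aeval_ge P hP)
  rw [neg_le_neg_iff]
  have hm := logMahler_nonneg hP
  have h1 : logMahler P ≤ Real.log L := logMahler_le_log hP hL
  have h2 : (P.natDegree : ℝ) ≤ d := by exact_mod_cast hd
  gcongr
end

section
/- Let 𝕂 be a field of characteristic zero, β a nonzero element of 𝕂, and D₀, D₁, S, M positive integers satisfying S·M > (D₀ + M)(D₁ + 1). Let (ξ₁, η₁), …, (ξ_M, η_M) be elements of 𝕂 × 𝕂* with ξ₁, …, ξ_M pairwise distinct. Then there is no nonzero polynomial P ∈ 𝕂[X, Y] of degree ≤ D₀ in X and degree ≤ D₁ in Y satisfying δ^σ P(ξ_μ, η_μ) = 0 for all 1 ≤ μ ≤ M and 0 ≤ σ < S. -/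
open MvPolynomial

/-!
Write `P = ∑ p_j(X) Y^j`, the sum over the `n ≤ D₁ + 1` indices with `p_j ≠ 0`. Then
`δ^σ P = ∑ (d/dX + β j)^σ p_j · Y^j`. Let `Δ ∈ 𝕂[X]` be the determinant of the `n × n` matrix
with entries `(d/dX + β j)^σ p_j`, `0 ≤ σ < n`; up to an exponential factor it is the Wronskian of
the functions `p_j(x) e^{β j x}`.

* `Δ ≠ 0`: its coefficient in degree `∑ deg p_j` is the product of the leading coefficients of the
  `p_j` and the Vandermonde determinant of the distinct numbers `β j` (`wronskian_ne_zero`).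
* `deg Δ ≤ n D₀`.
* By Cramer's rule `Δ · Y^j` is in the ideal generated by `P, δ P, …, δ^{n-1} P`. The polynomials
  vanishing to order `m` along `δ` at a point form an ideal (`VanishesTo.mul_left`), and `δ` lowers
  the order by at most one, so `Δ · Y^j` vanishes to order `S - n + 1` at every `(ξ_μ, η_μ)`. As
  `Y^j` is an eigenvector of `δ` and `η_μ ≠ 0`, `ξ_μ` is a zero of `Δ` of
  multiplicity at least `S - n + 1`.

Hence `M (S - n + 1) ≤ n D₀`, which contradicts `S M > (D₀ + M)(D₁ + 1)`.
-/

/-- The derivation `δ = ∂/∂X + β Y ∂/∂Y` on `𝕂[X, Y]`, where `X` is the variable `0`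
and `Y` is the variable `1`. -/
noncomputable def deltaOp {𝕂 : Type*} [CommRing 𝕂] (β : 𝕂)
    (P : MvPolynomial (Fin 2) 𝕂) : MvPolynomial (Fin 2) 𝕂 :=
  pderiv 0 P + C β * X 1 * pderiv 1 P

section Delta

variable {𝕂 : Type*} [Field 𝕂]

/-! ### The derivation `δ` on the terms `p(X) Y^j` -/

lemma deltaOp_add (β : 𝕂) (P Q : MvPolynomial (Fin 2) 𝕂) :
    deltaOp β (P + Q) = deltaOp β P + deltaOp β Q := by
  simp only [deltaOp, map_add]; ring

lemma deltaOp_zero (β : 𝕂) : deltaOp β 0 = 0 := by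
  simp [deltaOp]

lemma deltaOp_sum (β : 𝕂) {ι : Type*} (s : Finset ι) (f : ι → MvPolynomial (Fin 2) 𝕂) :
    deltaOp β (∑ i ∈ s, f i) = ∑ i ∈ s, deltaOp β (f i) := by
  simp only [deltaOp, map_sum, Finset.mul_sum, Finset.sum_add_distrib]

lemma deltaOp_mul (β : 𝕂) (P Q : MvPolynomial (Fin 2) 𝕂) :
    deltaOp β (P * Q) = P * deltaOp β Q + Q * deltaOp β P := by
  simp only [deltaOp, Derivation.leibniz, smul_eq_mul]; ring

/-- The embedding `𝕂[X] → 𝕂[X, Y]`. -/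
noncomputable def inX : Polynomial 𝕂 →ₐ[𝕂] MvPolynomial (Fin 2) 𝕂 :=
  Polynomial.aeval (X 0)

/-- The operator `d/dX + β j` on `𝕂[X]`, which is `δ` acting on the coefficient of `Y^j`. -/
noncomputable def twist (β : 𝕂) (j : ℕ) (q : Polynomial 𝕂) : Polynomial 𝕂 :=
  Polynomial.derivative q + Polynomial.C (β * j) * q

lemma eval_inX (x : Fin 2 → 𝕂) (q : Polynomial 𝕂) : eval x (inX q) = q.eval (x 0) := by
  induction q using Polynomial.induction_on' with
  | add p q hp hq => simp only [map_add, hp, hq, Polynomial.eval_add]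
  | monomial n a => simp [inX, Polynomial.aeval_monomial]

lemma inX_C (c : 𝕂) : inX (Polynomial.C c) = C c := by
  rw [inX, Polynomial.aeval_C, algebraMap_eq]

lemma pderiv_inX (i : Fin 2) (q : Polynomial 𝕂) :
    pderiv i (inX q) = inX (Polynomial.derivative q) * pderiv i (X 0) := by
  induction q using Polynomial.induction_on' with
  | add p q hp hq => simp only [map_add, hp, hq, add_mul]
  | monomial n a =>
    simp only [inX, Polynomial.aeval_monomial, Polynomial.derivative_monomial,
      Derivation.leibniz, Derivation.leibniz_pow, algebraMap_eq, pderiv_C, smul_eq_mul,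
      nsmul_eq_mul, map_mul, map_natCast]
    ring

lemma deltaOp_term (β : 𝕂) (j : ℕ) (q : Polynomial 𝕂) :
    deltaOp β (inX q * X 1 ^ j) = inX (twist β j q) * X 1 ^ j := by
  rw [deltaOp_mul]
  have h1 : deltaOp β (inX q) = inX (Polynomial.derivative q) := by
    simp [deltaOp, pderiv_inX, pderiv_X]
  have h2 : deltaOp β (X 1 ^ j : MvPolynomial (Fin 2) 𝕂) = C (β * j) * X 1 ^ j := by
    rcases j with _ | j
    · simp [deltaOp]
    · simp [deltaOp, Derivation.leibniz_pow, pderiv_X]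
      ring
  rw [h1, h2]
  simp only [twist, map_add, map_mul inX, inX_C]
  ring

lemma deltaOp_iterate_sum (β : 𝕂) {ι : Type*} (s : Finset ι) (e : ι → ℕ)
    (q : ι → Polynomial 𝕂) (σ : ℕ) :
    (deltaOp β)^[σ] (∑ k ∈ s, inX (q k) * X 1 ^ e k)
      = ∑ k ∈ s, inX ((twist β (e k))^[σ] (q k)) * X 1 ^ e k := by
  induction σ with
  | zero => rfl
  | succ σ ih =>
    simp only [Function.iterate_succ_apply', ih, deltaOp_sum, deltaOp_term]

/-! ### Vanishing along `δ` at a point -/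

/-- `Q` vanishes to order at least `m` along `δ` at the point `x`. -/
def VanishesTo (β : 𝕂) (x : Fin 2 → 𝕂) (m : ℕ) (Q : MvPolynomial (Fin 2) 𝕂) : Prop :=
  ∀ σ < m, eval x ((deltaOp β)^[σ] Q) = 0

namespace VanishesTo

variable {β : 𝕂} {x : Fin 2 → 𝕂} {m : ℕ} {P Q : MvPolynomial (Fin 2) 𝕂}

lemma succ_iff : VanishesTo β x (m + 1) Q ↔ eval x Q = 0 ∧ VanishesTo β x m (deltaOp β Q) := by
  constructor
  · intro h
    exact ⟨h 0 (by omega), fun σ hσ => h (σ + 1) (by omega)⟩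
  · rintro ⟨h0, h1⟩ (_ | σ) hσ
    · exact h0
    · exact h1 σ (by omega)

lemma mono {m' : ℕ} (h : VanishesTo β x m Q) (hm : m' ≤ m) : VanishesTo β x m' Q :=
  fun σ hσ => h σ (by omega)

lemma add (hP : VanishesTo β x m P) (hQ : VanishesTo β x m Q) : VanishesTo β x m (P + Q) := by
  induction m generalizing P Q with
  | zero => intro σ hσ; omega
  | succ m ih =>
    rw [succ_iff] at *
    refine ⟨by simp [hP.1, hQ.1], ?_⟩
    rw [deltaOp_add]
    exact ih hP.2 hQ.2

lemma mul_left (A : MvPolynomial (Fin 2) 𝕂) (hQ : VanishesTo β x m Q) :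
    VanishesTo β x m (A * Q) := by
  induction m generalizing A Q with
  | zero => intro σ hσ; omega
  | succ m ih =>
    have hQ' := hQ.mono (Nat.le_succ m)
    rw [succ_iff] at *
    refine ⟨by simp [hQ.1], ?_⟩
    rw [deltaOp_mul, mul_comm Q]
    exact (ih A hQ.2).add (ih _ hQ')

lemma sum {ι : Type*} (s : Finset ι) (f : ι → MvPolynomial (Fin 2) 𝕂)
    (h : ∀ i ∈ s, VanishesTo β x m (f i)) : VanishesTo β x m (∑ i ∈ s, f i) := by
  classical
  induction s using Finset.induction_on with
  | empty =>
    intro σ _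
    have : (deltaOp β)^[σ] (0 : MvPolynomial (Fin 2) 𝕂) = 0 :=
      Function.iterate_fixed (deltaOp_zero β) σ
    simp [this]
  | insert a s ha ih =>
    rw [Finset.sum_insert ha]
    exact (h a (by simp)).add (ih fun i hi => h i (by simp [hi]))

lemma iterate {S i : ℕ} (h : VanishesTo β x S Q) (hm : m + i ≤ S) :
    VanishesTo β x m ((deltaOp β)^[i] Q) := by
  intro σ hσ
  rw [← Function.iterate_add_apply]
  exact h _ (by omega)

/-- Away from `Y = 0`, the factor `Y^j` does not affect the order of vanishing of a polynomial
in `X` alone. -/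
lemma derivative_eval {j : ℕ} {q : Polynomial 𝕂} (hx : x 1 ≠ 0)
    (h : VanishesTo β x m (inX q * X 1 ^ j)) :
    ∀ σ < m, (Polynomial.derivative^[σ] q).eval (x 0) = 0 := by
  induction m generalizing q with
  | zero => intro σ hσ; omega
  | succ m ih =>
    have h' := h.mono (Nat.le_succ m)
    rw [succ_iff] at h
    have hd : VanishesTo β x m (inX (Polynomial.derivative q) * X 1 ^ j) := by
      have h2 := h.2.add (h'.mul_left (-C (β * j)))
      rw [deltaOp_term, twist, map_add, map_mul inX, inX_C] at h2
      convert h2 using 1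
      ring
    rintro (_ | σ) hσ
    · have h0 := h.1
      rw [map_mul, map_pow, eval_X, eval_inX] at h0
      simpa [hx] using h0
    · exact ih hd σ (by omega)

end VanishesTo

/-! ### Expansion in powers of `Y` -/

/-- The coefficient of `Y^j` in `P`, as a polynomial in `X` truncated at degree `D`. -/
noncomputable def coeffY (D : ℕ) (P : MvPolynomial (Fin 2) 𝕂) (j : ℕ) : Polynomial 𝕂 :=
  ∑ i ∈ Finset.range (D + 1),
    Polynomial.monomial i (coeff (Finsupp.single 0 i + Finsupp.single 1 j) P)

lemma natDegree_coeffY_le (D : ℕ) (P : MvPolynomial (Fin 2) 𝕂) (j : ℕ) :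
    (coeffY D P j).natDegree ≤ D := by
  refine Polynomial.natDegree_sum_le_of_forall_le _ _ fun i hi => ?_
  have := Finset.mem_range.1 hi
  exact (Polynomial.natDegree_monomial_le _).trans (by omega)

lemma eq_sum_coeffY {D₀ D₁ : ℕ} {P : MvPolynomial (Fin 2) 𝕂}
    (h0 : degreeOf 0 P ≤ D₀) (h1 : degreeOf 1 P ≤ D₁) :
    P = ∑ j ∈ Finset.range (D₁ + 1), inX (coeffY D₀ P j) * X 1 ^ j := by
  classical
  have hterm : ∀ (i j : ℕ) (c : 𝕂), inX (Polynomial.monomial i c) * X 1 ^ j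
      = (monomial (Finsupp.single 0 i + Finsupp.single 1 j) c : MvPolynomial (Fin 2) 𝕂) := by
    intro i j c
    rw [inX, Polynomial.aeval_monomial, algebraMap_eq, X_pow_eq_monomial, X_pow_eq_monomial,
      C_mul_monomial, monomial_mul]
    simp
  have hfin : ∀ (m : Fin 2 →₀ ℕ) (i j : ℕ),
      Finsupp.single 0 i + Finsupp.single 1 j = m ↔ i = m 0 ∧ j = m 1 := by
    intro m i j
    constructor
    · rintro rfl; simp
    · rintro ⟨rfl, rfl⟩
      ext k; fin_cases k <;> simp
  ext m
  simp only [coeffY, map_sum, Finset.sum_mul, hterm, coeff_sum, coeff_monomial, hfin]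
  by_cases hm : m ∈ P.support
  · have b0 := (monomial_le_degreeOf 0 hm).trans h0
    have b1 := (monomial_le_degreeOf 1 hm).trans h1
    rw [Finset.sum_eq_single (m 1), Finset.sum_eq_single (m 0)]
    · rw [if_pos ⟨rfl, rfl⟩, (hfin m _ _).2 ⟨rfl, rfl⟩]
    · intro i _ hi; simp [hi]
    · intro hi; simp at hi; omega
    · intro j _ hj; simp [hj]
    · intro hj; simp at hj; omega
  · rw [notMem_support_iff] at hm
    rw [hm]
    symm
    refine Finset.sum_eq_zero fun j _ => Finset.sum_eq_zero fun i _ => ?_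
    split_ifs with h
    · rw [(hfin m _ _).2 h, hm]
    · rfl

/-! ### The Wronskian determinant -/

lemma twist_iterate_degree (β : 𝕂) (j : ℕ) {q : Polynomial 𝕂} {d : ℕ} (hq : q.natDegree ≤ d)
    (i : ℕ) : ((twist β j)^[i] q).natDegree ≤ d ∧
      ((twist β j)^[i] q).coeff d = (β * j) ^ i * q.coeff d := by
  induction i with
  | zero => simpa using hq
  | succ i ih =>
    obtain ⟨h1, h2⟩ := ih
    rw [Function.iterate_succ_apply']
    set r := (twist β j)^[i] q
    refine ⟨?_, ?_⟩
    · refine Polynomial.natDegree_add_le_of_degree_le ?_ ?_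
      · exact (Polynomial.natDegree_derivative_le r).trans (by omega)
      · exact (Polynomial.natDegree_C_mul_le _ _).trans h1
    · have : r.coeff (d + 1) = 0 := Polynomial.coeff_eq_zero_of_natDegree_lt (by omega)
      rw [twist, Polynomial.coeff_add, Polynomial.coeff_derivative, Polynomial.coeff_C_mul, this,
        h2]
      ring

lemma coeff_prod_of_natDegree_le' {ι : Type*} (s : Finset ι) (f : ι → Polynomial 𝕂) (d : ι → ℕ)
    (h : ∀ i ∈ s, (f i).natDegree ≤ d i) :
    (∏ i ∈ s, f i).natDegree ≤ ∑ i ∈ s, d i ∧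
      (∏ i ∈ s, f i).coeff (∑ i ∈ s, d i) = ∏ i ∈ s, (f i).coeff (d i) := by
  classical
  induction s using Finset.induction_on with
  | empty => simp
  | insert a s ha ih =>
    obtain ⟨h1, h2⟩ := ih fun i hi => h i (by simp [hi])
    have h3 := h a (by simp)
    rw [Finset.prod_insert ha, Finset.sum_insert ha, Finset.prod_insert ha, ← h2]
    exact ⟨Polynomial.natDegree_mul_le.trans (by omega),
      Polynomial.coeff_mul_add_eq_of_natDegree_le h3 h1⟩

/-- The determinant of a polynomial matrix whose `k`-th column has degrees at most `d k`: degree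
bound, and value of the coefficient in the extremal degree. -/
lemma det_degree {n : ℕ} (A : Matrix (Fin n) (Fin n) (Polynomial 𝕂)) (d : Fin n → ℕ)
    (h : ∀ i k, (A i k).natDegree ≤ d k) :
    A.det.natDegree ≤ ∑ k, d k ∧
      A.det.coeff (∑ k, d k) = (Matrix.of fun i k => (A i k).coeff (d k)).det := by
  have key := fun g : Equiv.Perm (Fin n) =>
    coeff_prod_of_natDegree_le' Finset.univ (fun k => A (g k) k) d fun k _ => h _ _
  constructor
  · rw [Matrix.det_apply]
    refine Polynomial.natDegree_sum_le_of_forall_le _ _ fun g _ => ?_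
    exact (Polynomial.natDegree_smul_le _ _).trans (key g).1
  · rw [Matrix.det_apply, Matrix.det_apply, Polynomial.finsetSum_coeff]
    refine Finset.sum_congr rfl fun g _ => ?_
    rw [Polynomial.coeff_smul, (key g).2]
    rfl

/-- The Wronskian-type matrix with entries `(d/dX + β e_k)^i p_k`. -/
noncomputable def wMatrix (β : 𝕂) {n : ℕ} (e : Fin n → ℕ) (p : Fin n → Polynomial 𝕂) :
    Matrix (Fin n) (Fin n) (Polynomial 𝕂) :=
  Matrix.of fun i k => (twist β (e k))^[i] (p k)

lemma wronskian_ne_zero [CharZero 𝕂] {β : 𝕂} (hβ : β ≠ 0) {n : ℕ} {e : Fin n → ℕ}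
    (he : Function.Injective e) {p : Fin n → Polynomial 𝕂} (hp : ∀ k, p k ≠ 0) :
    (wMatrix β e p).det ≠ 0 := by
  intro h0
  have h := (det_degree (wMatrix β e p) (fun k => (p k).natDegree)
    fun i k => (twist_iterate_degree β (e k) le_rfl i).1).2
  rw [h0, Polynomial.coeff_zero] at h
  have hM : (Matrix.of fun i k => ((wMatrix β e p) i k).coeff ((p k).natDegree))
      = (Matrix.vandermonde fun k => β * (e k : 𝕂)).transpose *
        Matrix.diagonal fun k => (p k).leadingCoeff := by
    ext i k
    rw [Matrix.mul_diagonal, Matrix.transpose_apply, Matrix.vandermonde_apply]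
    exact (twist_iterate_degree β (e k) le_rfl i).2
  rw [hM, Matrix.det_mul, Matrix.det_transpose, Matrix.det_diagonal] at h
  refine mul_ne_zero ?_ ?_ h.symm
  · rw [Matrix.det_vandermonde_ne_zero_iff]
    intro a b hab
    exact he (by exact_mod_cast mul_left_cancel₀ hβ hab)
  · exact Finset.prod_ne_zero_iff.2 fun k _ => Polynomial.leadingCoeff_ne_zero.2 (hp k)

/-- Cramer's rule puts `Δ · Y^{e_k}` in the ideal generated by `P, δ P, …, δ^{n-1} P`. -/
lemma vanishesTo_wronskian {β : 𝕂} {x : Fin 2 → 𝕂} {n S m : ℕ} (hm : m + n ≤ S + 1)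
    (e : Fin n → ℕ) (p : Fin n → Polynomial 𝕂)
    (h : VanishesTo β x S (∑ k, inX (p k) * X 1 ^ e k)) (k : Fin n) :
    VanishesTo β x m (inX (wMatrix β e p).det * X 1 ^ e k) := by
  set A := wMatrix β e p
  set P := ∑ k, inX (p k) * X 1 ^ e k
  have hrow : ∀ i : Fin n, (deltaOp β)^[i] P = ∑ l, inX (A i l) * X 1 ^ e l :=
    fun i => deltaOp_iterate_sum β Finset.univ e p i
  have hadj : ∀ l, ∑ i, inX (A.adjugate k i) * inX (A i l)
      = if k = l then inX A.det else 0 := by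
    intro l
    have := congrFun (congrFun (Matrix.adjugate_mul A) k) l
    rw [Matrix.mul_apply, Matrix.smul_apply, Matrix.one_apply] at this
    simp only [← map_mul, ← map_sum, this]
    split_ifs <;> simp
  have hcramer : inX A.det * X 1 ^ e k
      = ∑ i : Fin n, inX (A.adjugate k i) * (deltaOp β)^[i] P := by
    simp only [hrow, Finset.mul_sum]
    rw [Finset.sum_comm]
    simp only [← mul_assoc, ← Finset.sum_mul, hadj]
    simp
  rw [hcramer]
  refine VanishesTo.sum _ _ fun i _ => VanishesTo.mul_left _ (h.iterate ?_)
  omega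

end Delta

/-! ### The estimate -/

/-- **Lemma 2 (multiplicity estimate).** Let `𝕂` be a field of characteristic zero,
`β ∈ 𝕂` nonzero, and `D₀, D₁, S, M` positive integers with `S M > (D₀ + M)(D₁ + 1)`.
Let `(ξ₁, η₁), …, (ξ_M, η_M) ∈ 𝕂 × 𝕂*` with the `ξ_μ` pairwise distinct. Then no nonzero
`P ∈ 𝕂[X, Y]` with `deg_X P ≤ D₀` and `deg_Y P ≤ D₁` satisfies
`δ^σ P(ξ_μ, η_μ) = 0` for all `1 ≤ μ ≤ M` and `0 ≤ σ < S`. -/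
theorem multiplicity_estimate {𝕂 : Type*} [Field 𝕂] [CharZero 𝕂]
    (β : 𝕂) (hβ : β ≠ 0) (D₀ D₁ S M : ℕ)
    (hD₀ : 0 < D₀) (hD₁ : 0 < D₁) (hS : 0 < S) (hM : 0 < M)
    (hcond : (D₀ + M) * (D₁ + 1) < S * M)
    (ξ η : Fin M → 𝕂) (hη : ∀ μ, η μ ≠ 0) (hξ : Function.Injective ξ) :
    ¬ ∃ P : MvPolynomial (Fin 2) 𝕂, P ≠ 0 ∧
      degreeOf 0 P ≤ D₀ ∧ degreeOf 1 P ≤ D₁ ∧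
      ∀ (μ : Fin M) (σ : ℕ), σ < S →
        eval (fun i => if i = 0 then ξ μ else η μ) ((deltaOp β)^[σ] P) = 0 := by
  classical
  rintro ⟨P, hP, h0, h1, hvan⟩
  set J := (Finset.range (D₁ + 1)).filter fun j => coeffY D₀ P j ≠ 0 with hJ
  set n := J.card with hn
  have hnle : n ≤ D₁ + 1 := (Finset.card_filter_le _ _).trans (by simp)
  let e : Fin n → ℕ := J.orderEmbOfFin rfl
  have he : Function.Injective e := (J.orderEmbOfFin rfl).injective
  let p : Fin n → Polynomial 𝕂 := fun k => coeffY D₀ P (e k)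
  have hp : ∀ k, p k ≠ 0 := fun k =>
    (Finset.mem_filter.1 (J.orderEmbOfFin_mem rfl k)).2
  have hPsum : P = ∑ k, inX (p k) * X 1 ^ e k := by
    have hPJ : P = ∑ j ∈ J, inX (coeffY D₀ P j) * X 1 ^ j := by
      conv_lhs => rw [eq_sum_coeffY h0 h1]
      refine (Finset.sum_subset (Finset.filter_subset _ _) fun j hj hj' => ?_).symm
      have : coeffY D₀ P j = 0 := by
        by_contra hne
        exact hj' (Finset.mem_filter.2 ⟨hj, hne⟩)
      simp [this]
    have himg : Finset.univ.image e = J := Finset.image_orderEmbOfFin_univ J rfl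
    conv_lhs => rw [hPJ]
    rw [← himg, Finset.sum_image fun a _ b _ hab => he hab]
  have hnpos : 0 < n := by
    rcases Nat.eq_zero_or_pos n with h | h
    · refine absurd ?_ hP
      have : IsEmpty (Fin n) := by rw [h]; infer_instance
      rw [hPsum]
      exact Finset.sum_of_isEmpty _
    · exact h
  set Δ := (wMatrix β e p).det
  have hΔ : Δ ≠ 0 := wronskian_ne_zero hβ he hp
  have hdeg : Δ.natDegree ≤ n * D₀ := by
    have := (det_degree (wMatrix β e p) (fun _ => D₀)
      fun i k => (twist_iterate_degree β (e k) (natDegree_coeffY_le D₀ P (e k)) i).1).1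
    simpa using this
  -- The hypothesis on the parameters forces `n ≤ S`, so `S + 1 - n` below is not truncated.
  have hSn : n ≤ S := by
    by_contra hlt
    push Not at hlt
    nlinarith [Nat.mul_le_mul_right M (show S ≤ D₁ + 1 by omega)]
  obtain ⟨m, hm⟩ : ∃ m, m + n = S + 1 := ⟨S + 1 - n, by omega⟩
  have hdvd : ∀ μ, (Polynomial.X - Polynomial.C (ξ μ)) ^ m ∣ Δ := by
    intro μ
    have hv : VanishesTo β (fun i => if i = 0 then ξ μ else η μ) S P := hvan μ
    rw [hPsum] at hv
    have hz := (vanishesTo_wronskian hm.le e p hv ⟨0, hnpos⟩).derivative_eval (by simpa using hη μ)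
    obtain ⟨m', rfl⟩ : ∃ m', m = m' + 1 := ⟨m - 1, by omega⟩
    rw [← Polynomial.le_rootMultiplicity_iff hΔ]
    refine Polynomial.lt_rootMultiplicity_of_isRoot_iterate_derivative hΔ fun σ hσ => ?_
    simpa using hz σ (by omega)
  have hprod : ∏ μ, (Polynomial.X - Polynomial.C (ξ μ)) ^ m ∣ Δ := by
    refine Finset.prod_dvd_of_coprime (fun a _ b _ hab => ?_) fun μ _ => hdvd μ
    exact (Polynomial.pairwise_coprime_X_sub_C hξ hab).pow
  have hle := (Polynomial.natDegree_le_of_dvd hprod hΔ).trans hdeg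
  rw [Polynomial.natDegree_prod_of_monic _ _ fun μ _ => (Polynomial.monic_X_sub_C _).pow _] at hle
  simp only [Polynomial.natDegree_pow, Polynomial.natDegree_X_sub_C, mul_one, Finset.sum_const,
    Finset.card_univ, Fintype.card_fin, smul_eq_mul] at hle
  -- `M (S + 1 - n) ≤ n D₀` gives `S M < n (D₀ + M) ≤ (D₁ + 1) (D₀ + M)`.
  have hmM : M * m + M * n = M * S + M := by rw [← mul_add, hm]; ring
  nlinarith [Nat.mul_le_mul_right (D₀ + M) hnle]
end

section
/- Let N ≥ 1, H ≥ 1, σ ≥ 0 and x be integers, and set d_σ = ν(H)^σ where ν(H) is the least common multiple of 1, 2, …, H. Then for every integer u with 0 ≤ u ≤ σ, the number d_σ · Δ^{(u)}(x, N, H) is an integer. -/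
/-!
Write `b_k = z(z+1)⋯(z+k-1)/k!`. Since `k b_k = (z+k-1) b_{k-1}`, induction on `k` gives
`b_k' = ∑_{i<k} b_i / (k-i)` (this is `D = -log(1-∇)` applied to `b_k`, where `∇ b_k = b_{k-1}`).
For `k ≤ H` all denominators `k-i` divide `d = ν(H)`, so `d • b_k'` is an integer combination of
`b_0, …, b_{k-1}`. As the `b_i` take integer values at integers, induction on `u` shows that
`d^u b_k^{(u)}` does too. By the Leibniz rule the polynomials with this property for every `u` are
closed under products, and `Δ(z, N, H)` is a product of polynomials `b_k` with `k ≤ H`.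
-/

open Polynomial

/-- The rising factorial polynomial `z (z+1) ⋯ (z+k−1)`. -/
noncomputable def risingPoly (k : ℕ) : Polynomial ℚ :=
  ∏ j ∈ Finset.range k, (Polynomial.X + Polynomial.C (j : ℚ))

/-- The binomial polynomial
`Δ(z, N, H) = (z(z+1)⋯(z+H−1)/H!)^q · z(z+1)⋯(z+r−1)/r!`, where `N = qH + r` with
`1 ≤ r ≤ H` (and `Δ(z, 0, H) = 1`). -/
noncomputable def binomPoly (N H : ℕ) : Polynomial ℚ :=
  if N = 0 then 1 else
    (Polynomial.C ((H.factorial : ℚ)⁻¹) * risingPoly H) ^ ((N - 1) / H) *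
      (Polynomial.C (((N - ((N - 1) / H) * H).factorial : ℚ)⁻¹) *
        risingPoly (N - ((N - 1) / H) * H))

/-- `ν(H)`: the least common multiple of `1, 2, …, H`. -/
def nuLcm (H : ℕ) : ℕ := (Finset.Icc 1 H).lcm id

/-- The integers, as a subring of `ℚ`. -/
def ratInt : Subring ℚ := (Int.castRingHom ℚ).range

lemma intCast_mem_ratInt (n : ℤ) : (n : ℚ) ∈ ratInt := ⟨n, by simp⟩

lemma natCast_mem_ratInt (n : ℕ) : (n : ℚ) ∈ ratInt := ⟨n, by simp⟩

/-- The property that `d ^ u * p^{(u)}` takes integer values at integers, for every `u`. -/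
def DerivIntegral (d : ℕ) (p : ℚ[X]) : Prop :=
  ∀ (u : ℕ) (x : ℤ), (d : ℚ) ^ u * eval (x : ℚ) (derivative^[u] p) ∈ ratInt

lemma DerivIntegral.one (d : ℕ) : DerivIntegral d 1 := by
  intro u x
  rcases u with _ | u
  · simp
  · simp [Function.iterate_succ_apply]

lemma DerivIntegral.mul {d : ℕ} {p q : ℚ[X]} (hp : DerivIntegral d p) (hq : DerivIntegral d q) :
    DerivIntegral d (p * q) := by
  intro u x
  rw [iterate_derivative_mul, eval_finsetSum, Finset.mul_sum]
  refine ratInt.sum_mem fun k hk => ?_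
  have hk' : u - k + k = u := Nat.sub_add_cancel (Nat.lt_succ_iff.mp (Finset.mem_range.mp hk))
  have h := ratInt.mul_mem (natCast_mem_ratInt (u.choose k))
    (ratInt.mul_mem (hp (u - k) x) (hq k x))
  convert h using 1
  rw [← hk', pow_add, hk']
  simp only [nsmul_eq_mul, eval_mul, eval_natCast]
  ring

lemma DerivIntegral.pow {d : ℕ} {p : ℚ[X]} (hp : DerivIntegral d p) (n : ℕ) :
    DerivIntegral d (p ^ n) := by
  induction n with
  | zero => simpa using DerivIntegral.one d
  | succ n ih => rw [pow_succ]; exact ih.mul hp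

/-- The polynomial `b_k = z(z+1)⋯(z+k-1)/k!`. -/
noncomputable def multichoosePoly (k : ℕ) : ℚ[X] := C ((k.factorial : ℚ)⁻¹) * risingPoly k

lemma multichoosePoly_succ (k : ℕ) :
    C ((k : ℚ) + 1) * multichoosePoly (k + 1) = multichoosePoly k * (X + C (k : ℚ)) := by
  have h : ((k : ℚ) + 1) * ((k + 1).factorial : ℚ)⁻¹ = (k.factorial : ℚ)⁻¹ := by
    have : (k.factorial : ℚ) ≠ 0 := by positivity
    rw [Nat.factorial_succ]
    push_cast
    field_simp
  unfold multichoosePoly risingPoly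
  rw [Finset.prod_range_succ, ← mul_assoc, ← C_mul, h, mul_assoc]

lemma derivative_multichoosePoly (k : ℕ) :
    derivative (multichoosePoly k) =
      ∑ i ∈ Finset.range k, C (((k - i : ℕ) : ℚ)⁻¹) * multichoosePoly i := by
  induction k with
  | zero => simp [multichoosePoly, risingPoly]
  | succ k ih =>
    have hk : (C ((k : ℚ) + 1) : ℚ[X]) ≠ 0 := by
      rw [Ne, C_eq_zero]; positivity
    apply mul_left_cancel₀ hk
    have h1 := congrArg derivative (multichoosePoly_succ k)
    rw [derivative_mul, derivative_mul, derivative_C, zero_mul, zero_add, ih] at h1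
    rw [h1]
    -- `(z + k) b_i = (z + i) b_i + (k - i) b_i = (i + 1) b_{i+1} + (k - i) b_i`
    have h2 : ∀ i ∈ Finset.range k,
        C (((k - i : ℕ) : ℚ)⁻¹) * multichoosePoly i * (X + C (k : ℚ)) =
        C (((k + 1 - (i + 1) : ℕ) : ℚ)⁻¹) * (C (((i + 1 : ℕ) : ℚ)) * multichoosePoly (i + 1)) +
          multichoosePoly i := by
      intro i hi
      have hi := Finset.mem_range.mp hi
      have hne : ((k - i : ℕ) : ℚ) ≠ 0 := by
        exact_mod_cast (Nat.sub_pos_of_lt hi).ne'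
      have hc : (C (((k - i : ℕ) : ℚ)⁻¹) : ℚ[X]) * C ((k - i : ℕ) : ℚ) = 1 := by
        rw [← C_mul, inv_mul_cancel₀ hne, C_1]
      have hki : (C (k : ℚ) : ℚ[X]) = C (i : ℚ) + C ((k - i : ℕ) : ℚ) := by
        rw [← C_add, ← Nat.cast_add, Nat.add_sub_cancel' hi.le]
      rw [Nat.add_sub_add_right, Nat.cast_add_one, multichoosePoly_succ, hki]
      linear_combination multichoosePoly i * hc
    -- The `i = 0` term of the shifted sum carries the factor `i = 0`.
    have h3 := Finset.sum_range_succ' (fun i =>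
      C (((k + 1 - i : ℕ) : ℚ)⁻¹) * (C ((i : ℕ) : ℚ) * multichoosePoly i)) k
    simp only [Nat.cast_zero, C_0, zero_mul, mul_zero, add_zero] at h3
    rw [derivative_add, derivative_X, derivative_C, add_zero, mul_one, Finset.sum_mul,
      Finset.sum_congr rfl h2, Finset.sum_add_distrib, ← h3, add_assoc,
      ← Finset.sum_range_succ, ← Finset.sum_add_distrib, Finset.mul_sum]
    refine Finset.sum_congr rfl fun i hi => ?_
    have hi := Finset.mem_range.mp hi
    have hne : ((k + 1 - i : ℕ) : ℚ) ≠ 0 := by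
      exact_mod_cast (Nat.sub_pos_of_lt hi).ne'
    have hc : (C (((k + 1 - i : ℕ) : ℚ)⁻¹) : ℚ[X]) * C ((k + 1 - i : ℕ) : ℚ) = 1 := by
      rw [← C_mul, inv_mul_cancel₀ hne, C_1]
    have hki : (C ((k : ℚ) + 1) : ℚ[X]) = C (i : ℚ) + C ((k + 1 - i : ℕ) : ℚ) := by
      rw [← C_add, ← Nat.cast_add, Nat.add_sub_cancel' hi.le, Nat.cast_add_one]
    rw [hki]
    linear_combination -multichoosePoly i * hc

lemma eval_multichoosePoly_mem (k : ℕ) (x : ℤ) : eval (x : ℚ) (multichoosePoly k) ∈ ratInt := by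
  obtain ⟨m, hm⟩ := Nat.factorial_coe_dvd_prod k x
  have h : eval (x : ℚ) (risingPoly k) = (k.factorial : ℚ) * m := by
    rw [risingPoly, eval_prod]
    have := congrArg (Int.cast : ℤ → ℚ) hm
    push_cast at this
    simpa using this
  have hk : (k.factorial : ℚ) ≠ 0 := by positivity
  rw [multichoosePoly, eval_mul, eval_C, h, inv_mul_cancel_left₀ hk]
  exact intCast_mem_ratInt m

lemma multichoosePoly_derivIntegral {H k : ℕ} (hk : k ≤ H) :
    DerivIntegral (nuLcm H) (multichoosePoly k) := by
  intro u x
  induction u generalizing k with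
  | zero => simpa using eval_multichoosePoly_mem k x
  | succ u ih =>
    rw [Function.iterate_succ_apply, derivative_multichoosePoly, iterate_derivative_sum,
      eval_finsetSum, Finset.mul_sum]
    refine ratInt.sum_mem fun i hi => ?_
    have hi := Finset.mem_range.mp hi
    have hdvd : (k - i) ∣ nuLcm H :=
      Finset.dvd_lcm (f := id) (Finset.mem_Icc.mpr ⟨by omega, by omega⟩)
    obtain ⟨c, hc⟩ := hdvd
    have hne : ((k - i : ℕ) : ℚ) ≠ 0 := by
      exact_mod_cast (Nat.sub_pos_of_lt hi).ne'
    have hcq : (nuLcm H : ℚ) * ((k - i : ℕ) : ℚ)⁻¹ = c := by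
      rw [hc, Nat.cast_mul]
      field_simp
    have h := ratInt.mul_mem (natCast_mem_ratInt c) (ih (k := i) (by omega))
    convert h using 1
    rw [iterate_derivative_C_mul, eval_mul, eval_C, ← hcq]
    ring

/-- **Lemma 4, integrality.** For integers `N ≥ 1`, `H ≥ 1`, `σ ≥ 0`, `x`, and
`d_σ = ν(H)^σ`, the number `d_σ · Δ^{(u)}(x, N, H)` is an integer for `0 ≤ u ≤ σ`. -/
theorem binomPoly_deriv_integer (N H : ℕ) (hN : 1 ≤ N) (hH : 1 ≤ H)
    (σ : ℕ) (x : ℤ) (u : ℕ) (hu : u ≤ σ) :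
    ∃ m : ℤ, ((nuLcm H : ℚ) ^ σ) *
      Polynomial.eval (x : ℚ) (Polynomial.derivative^[u] (binomPoly N H)) = (m : ℚ) := by
  have hr : N - ((N - 1) / H) * H ≤ H := by
    have h1 := Nat.div_add_mod' (N - 1) H
    have h2 := Nat.mod_lt (N - 1) hH
    omega
  have hb : DerivIntegral (nuLcm H) (binomPoly N H) := by
    rw [binomPoly, if_neg (by omega)]
    exact ((multichoosePoly_derivIntegral le_rfl).pow _).mul (multichoosePoly_derivIntegral hr)
  have h := ratInt.mul_mem (ratInt.pow_mem (natCast_mem_ratInt (nuLcm H)) (σ - u)) (hb u x)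
  rw [← mul_assoc, ← pow_add, Nat.sub_add_cancel hu] at h
  obtain ⟨m, hm⟩ := h
  exact ⟨m, by simpa using hm.symm⟩
end
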